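/- arXiv:1503.01582 — 3 statements merged into one kernel-verified Lean document; each statement's English description precedes it below -/
import Mathlib

section
/- Let Σ be a closed hypersurface of ℝⁿ (not necessarily connected) and let K be a bounded measurable subset of ℝⁿ, symmetric with respect to the origin and containing the origin in its interior. Then there exists a hypersurface Σ̃ of ℝⁿ isotopic to Σ and a real-valued Schwartz function f whose Fourier transform has compact support contained in K, such that f vanishes transversally along Σ̃. -/
open scoped FourierTransform

noncomputable section

abbrev En (n : ℕ) := EuclideanSpace ℝ (Fin n)

/-- A diffeomorphism of `ℝⁿ`. -/
def IsDiffeo {n : ℕ} (φ : En n → En n) : Prop :=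
  ∃ ψ : En n → En n, ContDiff ℝ (⊤ : ℕ∞) φ ∧ ContDiff ℝ (⊤ : ℕ∞) ψ ∧
    Function.LeftInverse ψ φ ∧ Function.RightInverse ψ φ

/-- Two subsets of `ℝⁿ` are isotopic if they are related by an ambient isotopy, i.e. a continuous
family of diffeomorphisms starting at the identity. -/
def Isotopic {n : ℕ} (S S' : Set (En n)) : Prop :=
  ∃ φ : ℝ → En n → En n,
    Continuous (fun p : ℝ × En n => φ p.1 p.2) ∧
    (∀ t ∈ Set.Icc (0:ℝ) 1, IsDiffeo (φ t)) ∧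
    φ 0 = id ∧ φ 1 '' S = S'

/-- A closed hypersurface of `ℝⁿ`: a compact set which is the zero set of a smooth function
having `0` as a regular value there. -/
def IsClosedHypersurface {n : ℕ} (S : Set (En n)) : Prop :=
  IsCompact S ∧ ∃ g : En n → ℝ, ContDiff ℝ (⊤ : ℕ∞) g ∧ S = g ⁻¹' {0} ∧
    ∀ x ∈ S, fderiv ℝ g x ≠ 0

open scoped NNReal ContDiff

theorem diffeo_of_lip {E : Type*} [NormedAddCommGroup E] [NormedSpace ℝ E] [CompleteSpace E]
    (u : E → E) (hu : ContDiff ℝ ∞ u) (c : ℝ≥0) (hc : c < 1) (hl : LipschitzWith c u) :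
    ∃ ψ : E → E, ContDiff ℝ ∞ ψ ∧ Function.LeftInverse ψ (fun x => x + u x) ∧
      Function.RightInverse ψ (fun x => x + u x) := by
  rcases subsingleton_or_nontrivial E with hE | hE
  · exact ⟨fun x => x, contDiff_id, fun x => Subsingleton.elim _ _, fun x => Subsingleton.elim _ _⟩
  have happ : ApproximatesLinearOn (fun x => x + u x)
      ((ContinuousLinearEquiv.refl ℝ E : E ≃L[ℝ] E) : E →L[ℝ] E) Set.univ c := by
    intro x _ y _
    have := hl.dist_le_mul x y
    simp only [dist_eq_norm] at this
    refine le_trans (le_of_eq ?_) this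
    congr 1
    simp only [ContinuousLinearEquiv.coe_refl, ContinuousLinearMap.id_apply]
    abel
  have hN : c < ‖(((ContinuousLinearEquiv.refl ℝ E : E ≃L[ℝ] E).symm : E →L[ℝ] E))‖₊⁻¹ := by
    have : ‖(((ContinuousLinearEquiv.refl ℝ E : E ≃L[ℝ] E).symm : E →L[ℝ] E))‖₊ = 1 := by
      have := ContinuousLinearMap.norm_id (𝕜 := ℝ) (E := E)
      exact NNReal.eq this
    rw [this]; simpa using hc
  let H := happ.toHomeomorph _ (Or.inr hN)
  have hH : ∀ x, H x = x + u x := fun x => rfl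
  have hdu : ∀ x, ‖-fderiv ℝ u x‖ < 1 := fun x => by
    rw [norm_neg]
    exact lt_of_le_of_lt (norm_fderiv_le_of_lipschitz ℝ hl) (by exact_mod_cast hc)
  let D : E → E ≃L[ℝ] E := fun x => ContinuousLinearEquiv.unitsEquiv ℝ E (Units.oneSub _ (hdu x))
  have hD : ∀ x, HasFDerivAt H (D x : E →L[ℝ] E) x := by
    intro x
    have h1 : HasFDerivAt (fun x => x + u x) (ContinuousLinearMap.id ℝ E + fderiv ℝ u x) x :=
      (hasFDerivAt_id x).add (hu.differentiable (by simp) x).hasFDerivAt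
    have h2 : (D x : E →L[ℝ] E) = ContinuousLinearMap.id ℝ E + fderiv ℝ u x := by
      refine ContinuousLinearMap.ext fun v => ?_
      change (((1 : E →L[ℝ] E) - -fderiv ℝ u x : E →L[ℝ] E)) v = _
      simp
    rw [h2]
    exact h1
  refine ⟨H.symm, H.contDiff_symm hD ?_, fun x => H.symm_apply_apply x, fun x => H.apply_symm_apply x⟩
  exact contDiff_id.add hu

theorem implicit_lip {E : Type*} [NormedAddCommGroup E] [NormedSpace ℝ E] [CompleteSpace E]
    (T : E × ℝ → ℝ) (hT : ContDiff ℝ ∞ T) (L : ℝ≥0) (hL : L < 1) (hl : LipschitzWith L T) :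
    ∃ s : E → ℝ, ContDiff ℝ ∞ s ∧ (∀ x, s x + T (x, s x) = 0) ∧ LipschitzWith L s ∧
      ∀ x, |s x| ≤ |T (x, 0)| + L * |s x| := by
  obtain ⟨ψ, hψ, hl1, hr1⟩ := diffeo_of_lip (fun p : E × ℝ => ((0 : E), T p))
    (contDiff_const.prodMk hT) L hL (by
      intro p q
      have := hl p q
      simpa [Prod.edist_eq] using this)
  have key : ∀ x, (ψ (x, 0)).1 = x ∧ (ψ (x, 0)).2 + T (x, (ψ (x, 0)).2) = 0 := by
    intro x
    have h := hr1 (x, (0:ℝ))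
    have h1 := congrArg Prod.fst h
    have h2 := congrArg Prod.snd h
    simp at h1 h2
    refine ⟨h1, ?_⟩
    have h3 : (x, (ψ (x, 0)).2) = ψ (x, 0) := Prod.ext h1.symm rfl
    rw [h3]
    exact h2
  have hL' : (L : ℝ) < 1 := by exact_mod_cast hL
  refine ⟨fun x => (ψ (x, 0)).2, ?_, fun x => (key x).2, ?_, ?_⟩
  · exact contDiff_snd.comp (hψ.comp (contDiff_id.prodMk contDiff_const))
  · refine LipschitzWith.of_dist_le_mul fun x y => ?_
    have h := hl.dist_le_mul (x, (ψ (x, 0)).2) (y, (ψ (y, 0)).2)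
    have hx := (key x).2
    have hy := (key y).2
    generalize (ψ (x, 0)).2 = a at *
    generalize (ψ (y, 0)).2 = b at *
    rw [Prod.dist_eq] at h
    have e : dist (T (x, a)) (T (y, b)) = dist a b := by
      rw [Real.dist_eq, Real.dist_eq, ← abs_neg]; congr 1; linarith
    rw [e] at h
    simp only at h
    rcases le_total (dist x y) (dist a b) with h3 | h3
    · rw [max_eq_right h3] at h
      have : dist a b ≤ 0 := by nlinarith [dist_nonneg (x := a) (y := b)]
      have : 0 ≤ (L:ℝ) * dist x y := by positivity
      linarith
    · rwa [max_eq_left h3] at h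
  · intro x
    have h := hl.dist_le_mul (x, (ψ (x, 0)).2) (x, 0)
    have hx := (key x).2
    simp only
    generalize (ψ (x, 0)).2 = a at *
    simp [Prod.dist_eq, Real.dist_eq] at h
    have : a = - T (x, a) := by linarith
    calc |a| = |T (x,a)| := by rw [← abs_neg (T (x,a)), ← this]
      _ = |T (x,0) + (T (x,a) - T (x,0))| := by congr 1; ring
      _ ≤ _ := (abs_add_le _ _).trans (by linarith)

theorem lip_small {E : Type*} [NormedAddCommGroup E] [NormedSpace ℝ E]
    (R : E × ℝ → ℝ) (hR : ContDiff ℝ ∞ R) (C : Set E) (hC : IsCompact C)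
    (h0 : ∀ x ∉ C, ∀ s, R (x, s) = 0) (hd : ∀ x, fderiv ℝ R (x, 0) = 0) (η : ℝ≥0) (hη : 0 < η) :
    ∃ δ > 0, LipschitzOnWith η R (Set.univ ×ˢ Metric.closedBall (0:ℝ) δ) := by
  have hcd : Continuous (fderiv ℝ R) := hR.continuous_fderiv (by simp)
  have hop : IsOpen {p | ‖fderiv ℝ R p‖₊ < η} := isOpen_lt hcd.nnnorm continuous_const
  obtain ⟨U, V, hU, hV, hCU, h0V, hUV⟩ := generalized_tube_lemma hC (isCompact_singleton (x := (0:ℝ)))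
    hop (by rintro ⟨x, s⟩ ⟨_, hs⟩; simp at hs; subst hs; simpa [hd] using hη)
  obtain ⟨δ, hδ, hδV⟩ := Metric.nhds_basis_closedBall.mem_iff.1 (hV.mem_nhds (h0V rfl))
  refine ⟨δ, hδ, ?_⟩
  refine Convex.lipschitzOnWith_of_nnnorm_fderiv_le (𝕜 := ℝ)
    (fun x _ => hR.differentiable (by simp) x) ?_ (convex_univ.prod (convex_closedBall _ _))
  rintro ⟨x, s⟩ ⟨_, hs⟩
  by_cases hx : x ∈ C
  · exact le_of_lt (hUV (Set.mk_mem_prod (hCU hx) (hδV hs)))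
  · have : R =ᶠ[nhds (x, s)] fun _ => 0 := by
      have : ∀ᶠ p : E × ℝ in nhds (x, s), p.1 ∈ Cᶜ :=
        continuous_fst.continuousAt.eventually_mem (hC.isClosed.isOpen_compl.mem_nhds hx)
      filter_upwards [this] with p hp using h0 _ hp _
    rw [this.fderiv_eq]
    simp

open MeasureTheory Filter Topology in
theorem fourierInv_bounds {V : Type*} [NormedAddCommGroup V] [InnerProductSpace ℝ V]
    [FiniteDimensional ℝ V] [MeasurableSpace V] [BorelSpace V] (e : SchwartzMap V ℂ) :
    (∀ x, ‖𝓕⁻ (e : V → ℂ) x‖ ≤ ∫ v, (1 + 2 * Real.pi * ‖v‖) * ‖e v‖) ∧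
    (∀ x y, ‖𝓕⁻ (e : V → ℂ) x - 𝓕⁻ (e : V → ℂ) y‖ ≤
      (∫ v, (1 + 2 * Real.pi * ‖v‖) * ‖e v‖) * ‖x - y‖) := by
  have hi0 : Integrable (fun v => ‖e v‖) := e.integrable.norm
  have hi1 : Integrable (fun v => ‖v‖ * ‖e v‖) := by simpa using e.integrable_pow_mul volume 1
  have hi : Integrable (fun v => (1 + 2 * Real.pi * ‖v‖) * ‖e v‖) := by
    refine (hi0.add (hi1.const_mul (2 * Real.pi))).congr (Eventually.of_forall fun v => ?_)
    simp; ring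
  have hexp : ∀ t : ℝ, ‖Complex.exp ((t : ℂ) * Complex.I)‖ = 1 := Complex.norm_exp_ofReal_mul_I
  have hint : ∀ x, Integrable (fun v => Complex.exp ((↑(2 * Real.pi * inner ℝ v x) * Complex.I)) • e v) := by
    intro x
    refine e.integrable.mono ?_ (Eventually.of_forall fun v => ?_)
    · exact Continuous.aestronglyMeasurable (by fun_prop)
    · rw [norm_smul, hexp, one_mul]
  have hp := Real.pi_pos
  constructor
  · intro x
    rw [Real.fourierInv_eq']
    refine (norm_integral_le_integral_norm _).trans (integral_mono (hint x).norm hi fun v => ?_)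
    simp only [norm_smul, hexp]
    refine mul_le_mul_of_nonneg_right ?_ (norm_nonneg _)
    have : 0 ≤ 2 * Real.pi * ‖v‖ := by positivity
    linarith
  · intro x y
    rw [Real.fourierInv_eq', Real.fourierInv_eq', ← integral_sub (hint x) (hint y),
      ← integral_mul_const]
    refine (norm_integral_le_integral_norm _).trans
      (integral_mono ((hint x).sub (hint y)).norm (hi.mul_const _) fun v => ?_)
    simp only [← sub_smul, norm_smul]
    have h1 : ‖Complex.exp ((↑(2 * Real.pi * inner ℝ v x) * Complex.I)) -
        Complex.exp ((↑(2 * Real.pi * inner ℝ v y) * Complex.I))‖ ≤ 2 * Real.pi * ‖v‖ * ‖x - y‖ := by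
      have e1 : Complex.exp ((↑(2 * Real.pi * inner ℝ v x) * Complex.I)) -
        Complex.exp ((↑(2 * Real.pi * inner ℝ v y) * Complex.I)) =
        Complex.exp ((↑(2 * Real.pi * inner ℝ v y) * Complex.I)) *
          (Complex.exp (Complex.I * ↑(2 * Real.pi * inner ℝ v (x - y))) - 1) := by
        rw [mul_sub, ← Complex.exp_add, mul_one, inner_sub_right]
        congr 2
        push_cast; ring
      rw [e1, norm_mul, hexp, one_mul]
      refine Real.norm_exp_I_mul_ofReal_sub_one_le.trans ?_
      rw [Real.norm_eq_abs, abs_mul, abs_of_pos (by positivity : 0 < 2 * Real.pi), mul_assoc (2 * Real.pi) ‖v‖]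
      exact mul_le_mul_of_nonneg_left (abs_real_inner_le_norm v (x - y)) (by positivity)
    calc _ ≤ 2 * Real.pi * ‖v‖ * ‖x - y‖ * ‖e v‖ := mul_le_mul_of_nonneg_right h1 (norm_nonneg _)
      _ ≤ (1 + 2 * Real.pi * ‖v‖) * ‖e v‖ * ‖x - y‖ := by
        have : 0 ≤ ‖e v‖ * ‖x - y‖ := by positivity
        nlinarith

open MeasureTheory in
theorem fourier_conj {V : Type*} [NormedAddCommGroup V] [InnerProductSpace ℝ V]
    [FiniteDimensional ℝ V] [MeasurableSpace V] [BorelSpace V] (h : V → ℂ) (w : V) :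
    (starRingEnd ℂ) (𝓕 h w) = 𝓕 (fun v => (starRingEnd ℂ) (h v)) (-w) := by
  rw [Real.fourier_eq', Real.fourier_eq', ← integral_conj]
  congr 1
  ext v
  simp only [smul_eq_mul, map_mul, ← Complex.exp_conj, Complex.conj_ofReal, Complex.conj_I,
    inner_neg_right]
  congr 2
  push_cast; ring

open MeasureTheory Filter Topology in
theorem approx_band {V : Type*} [NormedAddCommGroup V] [InnerProductSpace ℝ V]
    [FiniteDimensional ℝ V] [MeasurableSpace V] [BorelSpace V] (G : V → ℝ) (hG : ContDiff ℝ ∞ G)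
    (hGc : HasCompactSupport G) (ε : ℝ) (hε : 0 < ε) :
    ∃ (f : SchwartzMap V ℂ) (R : ℝ), 0 < R ∧ (∀ x, (f x).im = 0) ∧
      (∀ w, R ≤ ‖w‖ → 𝓕 (f : V → ℂ) w = 0) ∧
      (∀ x, |(f x).re - G x| ≤ ε) ∧
      (∀ x y, |((f x).re - G x) - ((f y).re - G y)| ≤ ε * ‖x - y‖) := by
  have hgs : HasCompactSupport (fun x => (G x : ℂ)) := hGc.comp_left (g := fun t : ℝ => (t:ℂ)) (by simp)
  have hgd : ContDiff ℝ ∞ (fun x => (G x : ℂ)) := Complex.ofRealCLM.contDiff.comp hG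
  let Gs : SchwartzMap V ℂ := hgs.toSchwartzMap hgd
  have hGs : ∀ x, Gs x = G x := fun x => rfl
  let P : SchwartzMap V ℂ := 𝓕 Gs
  have hPc : ∀ v, (starRingEnd ℂ) (P v) = P (-v) := by
    intro v
    have := fourier_conj (Gs : V → ℂ) v
    simp only [hGs, Complex.conj_ofReal] at this
    exact this
  let b : ℕ → ContDiffBump (0 : V) := fun m => ⟨m + 1, m + 2, by positivity, by linarith⟩
  have hb : ∀ m, HasCompactSupport (fun v => ((b m v : ℝ) : ℂ) * P v) := fun m =>
    ((b m).hasCompactSupport.comp_left (g := fun t : ℝ => (t:ℂ)) (by simp)).mul_right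
  have hbd : ∀ m, ContDiff ℝ ∞ (fun v => ((b m v : ℝ) : ℂ) * P v) := fun m =>
    (Complex.ofRealCLM.contDiff.comp (b m).contDiff).mul (P.smooth ⊤)
  let h : ℕ → SchwartzMap V ℂ := fun m => (hb m).toSchwartzMap (hbd m)
  have hh : ∀ m v, h m v = ((b m v : ℝ) : ℂ) * P v := fun m v => rfl
  have hlim : Tendsto (fun m => ∫ v, (1 + 2 * Real.pi * ‖v‖) * ‖(h m - P) v‖) atTop (𝓝 0) := by
    have hi0 : Integrable (fun v => ‖P v‖) := P.integrable.norm
    have hi1 : Integrable (fun v => ‖v‖ * ‖P v‖) := by simpa using P.integrable_pow_mul volume 1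
    have hi : Integrable (fun v => (1 + 2 * Real.pi * ‖v‖) * ‖P v‖) := by
      refine (hi0.add (hi1.const_mul (2 * Real.pi))).congr (Eventually.of_forall fun v => ?_)
      simp; ring
    have := tendsto_integral_of_dominated_convergence
      (F := fun m v => (1 + 2 * Real.pi * ‖v‖) * ‖(h m - P) v‖) (f := fun _ => (0:ℝ)) _
      (fun m => Continuous.aestronglyMeasurable (by fun_prop)) hi
      (fun m => Eventually.of_forall fun v => ?_) (Eventually.of_forall fun v => ?_)
    · simpa using this
    · have hp := Real.pi_pos
      rw [norm_mul, norm_norm, Real.norm_of_nonneg (by positivity)]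
      refine mul_le_mul_of_nonneg_left ?_ (by positivity)
      have : (h m - P) v = ((b m v - 1 : ℝ) : ℂ) * P v := by
        rw [sub_apply, hh]; push_cast; ring
      rw [this, norm_mul, Complex.norm_real]
      refine mul_le_of_le_one_left (norm_nonneg _) ?_
      rw [Real.norm_eq_abs, abs_le]
      constructor <;> linarith [(b m).nonneg (x := v), (b m).le_one (x := v)]
    · refine tendsto_const_nhds.congr' ?_
      filter_upwards [eventually_ge_atTop ⌈‖v‖⌉₊] with m hm
      have h1 : b m v = 1 := by
        apply (b m).one_of_mem_closedBall
        rw [mem_closedBall_zero_iff]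
        have := Nat.ceil_le.1 hm
        change _ ≤ (m:ℝ) + 1
        linarith
      rw [sub_apply, hh, h1]
      simp
  obtain ⟨m, hm⟩ := (hlim.eventually (gt_mem_nhds hε)).exists
  have hbounds := fourierInv_bounds (h m - P)
  have hw : ∀ x, 𝓕⁻ ((h m - P : SchwartzMap V ℂ) : V → ℂ) x = (𝓕⁻ (h m)) x - G x := by
    intro x
    rw [← SchwartzMap.fourierInv_coe]
    have : 𝓕⁻ (h m - P) = 𝓕⁻ (h m) - Gs := by
      have e : 𝓕⁻ P = Gs := FourierTransform.fourierInv_fourier_eq Gs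
      rw [← e]
      exact map_sub (FourierTransform.fourierInvCLM ℂ (SchwartzMap V ℂ)) _ _
    rw [this]; rfl
  have hwr : ∀ x, (𝓕⁻ ((h m - P : SchwartzMap V ℂ) : V → ℂ) x).re = ((𝓕⁻ (h m)) x).re - G x := by
    intro x; rw [hw]; simp
  refine ⟨𝓕⁻ (h m), m + 2, by positivity, ?_, ?_, ?_, ?_⟩
  · intro x
    have e : (fun v => (starRingEnd ℂ) (h m v)) = fun v => h m (-v) := by
      funext v
      rw [hh, hh, map_mul, hPc, Complex.conj_ofReal, (b m).neg]
    rw [← Complex.conj_eq_iff_im, SchwartzMap.fourierInv_coe]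
    conv_lhs => rw [Real.fourierInv_eq_fourier_neg, fourier_conj, e, neg_neg,
      ← Real.fourierInv_eq_fourier_comp_neg]
  · intro w hw
    rw [← SchwartzMap.fourier_coe, FourierTransform.fourier_fourierInv_eq, hh]
    rw [(b m).zero_of_le_dist (by simpa using hw)]
    simp
  · intro x
    rw [← hwr]
    exact (Complex.abs_re_le_norm _).trans ((hbounds.1 x).trans hm.le)
  · intro x y
    rw [← hwr, ← hwr, ← Complex.sub_re]
    refine (Complex.abs_re_le_norm _).trans ((hbounds.2 x y).trans ?_)
    exact mul_le_mul_of_nonneg_right hm.le (norm_nonneg _)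

theorem exists_clamp : ∃ (Ck : ℝ≥0), ∀ δ : ℝ, 0 < δ → ∃ κ : ℝ → ℝ, ContDiff ℝ ∞ κ ∧
    HasCompactSupport κ ∧ LipschitzWith Ck κ ∧ (∀ s, |κ s| ≤ 2 * δ) ∧ (∀ s, |s| ≤ δ → κ s = s) := by
  let β : ContDiffBump (0 : ℝ) := ⟨1, 2, by norm_num, by norm_num⟩
  let k : ℝ → ℝ := fun t => t * β t
  have hk : ContDiff ℝ ∞ k := contDiff_id.mul β.contDiff
  have hkc : HasCompactSupport k := β.hasCompactSupport.mul_left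
  have hkb : ∀ t, |k t| ≤ 2 := by
    intro t
    by_cases ht : 2 ≤ |t|
    · have : β t = 0 := β.zero_of_le_dist (by simpa using ht)
      simp [k, this]
    · simp only [k, abs_mul, abs_of_nonneg β.nonneg]
      have := β.le_one (x := t)
      have := β.nonneg (x := t)
      have := abs_nonneg t
      nlinarith
  obtain ⟨C, hC⟩ := hk.lipschitzWith_of_hasCompactSupport hkc (by simp)
  refine ⟨C, fun δ hδ => ⟨fun s => δ * k (δ⁻¹ * s), ?_, ?_, ?_, ?_, ?_⟩⟩
  · exact contDiff_const.mul (hk.comp (contDiff_const.mul contDiff_id))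
  · have : HasCompactSupport (fun s => k (δ⁻¹ • s)) := hkc.comp_smul (inv_ne_zero hδ.ne')
    exact this.mul_left
  · refine LipschitzWith.of_dist_le_mul fun x y => ?_
    have := hC.dist_le_mul (δ⁻¹ * x) (δ⁻¹ * y)
    rw [Real.dist_eq, Real.dist_eq, ← mul_sub, abs_mul, abs_of_pos (inv_pos.2 hδ)] at this
    rw [Real.dist_eq, Real.dist_eq, ← mul_sub, abs_mul, abs_of_pos hδ]
    calc _ ≤ δ * (C * (δ⁻¹ * |x - y|)) := mul_le_mul_of_nonneg_left this hδ.le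
      _ = _ := by field_simp
  · intro s
    rw [abs_mul, abs_of_pos hδ]
    nlinarith [hkb (δ⁻¹ * s)]
  · intro s hs
    have : β (δ⁻¹ * s) = 1 := by
      apply β.one_of_mem_closedBall
      rw [mem_closedBall_zero_iff, Real.norm_eq_abs, abs_mul, abs_of_pos (inv_pos.2 hδ)]
      change _ ≤ (1:ℝ)
      rw [inv_mul_le_iff₀ hδ]
      linarith
    simp only [k, this]
    field_simp

theorem perturb_core {V : Type*} [NormedAddCommGroup V] [InnerProductSpace ℝ V]
    [FiniteDimensional ℝ V] [MeasurableSpace V] [BorelSpace V] (G : V → ℝ) (hG : ContDiff ℝ ∞ G)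
    (hGc : HasCompactSupport G) (ν : V → V) (hν : ContDiff ℝ ∞ ν) (hνc : HasCompactSupport ν)
    (S : Set V) (hS : ∀ x ∈ S, G x = 0 ∧ fderiv ℝ G x (ν x) = 1) :
    ∃ (f : SchwartzMap V ℂ) (R : ℝ) (u : V → V), 0 < R ∧ (∀ x, (f x).im = 0) ∧
      (∀ w, R ≤ ‖w‖ → 𝓕 (f : V → ℂ) w = 0) ∧ ContDiff ℝ ∞ u ∧ LipschitzWith (1/2) u ∧
      ∀ x ∈ S, f (x + u x) = 0 ∧ fderiv ℝ (f : V → ℂ) (x + u x) ≠ 0 := by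
  obtain ⟨B, hB⟩ := hν.lipschitzWith_of_hasCompactSupport hνc (by simp)
  obtain ⟨A', hA'⟩ := hνc.exists_bound_of_continuous hν.continuous
  obtain ⟨A, hA0, hA⟩ : ∃ A : ℝ, 0 ≤ A ∧ ∀ x, ‖ν x‖ ≤ A :=
    ⟨max A' 0, le_max_right _ _, fun x => (hA' x).trans (le_max_left _ _)⟩
  obtain ⟨Ck, hCk⟩ := exists_clamp
  -- the constant `L`
  obtain ⟨L, hL0, hL1, hLA⟩ : ∃ L : ℝ≥0, 0 < L ∧ (L : ℝ) ≤ 1 / 2 ∧ L * A ≤ 1 / 4 := by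
    refine ⟨⟨min (1/2) (1 / (4 * (A + 1))), by positivity⟩, ?_, ?_, ?_⟩
    · change (0:ℝ) < min (1/2) (1 / (4 * (A + 1)))
      positivity
    · exact min_le_left _ _
    · calc min (1/2) (1 / (4 * (A + 1))) * A ≤ (1 / (4 * (A + 1))) * A :=
            mul_le_mul_of_nonneg_right (min_le_right _ _) hA0
        _ ≤ 1 / 4 := by
            rw [div_mul_eq_mul_div, div_le_div_iff₀ (by positivity) (by norm_num)]
            linarith
  let R0 : V × ℝ → ℝ := fun p => G (p.1 + p.2 • ν p.1) - G p.1 - p.2 * fderiv ℝ G p.1 (ν p.1)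
  have hm0 : ContDiff ℝ ∞ (fun p : V × ℝ => p.1 + p.2 • ν p.1) :=
    contDiff_fst.add (contDiff_snd.smul (hν.comp contDiff_fst))
  have hDG : ContDiff ℝ ∞ (fderiv ℝ G) := hG.fderiv_right (by simp)
  have ha : ContDiff ℝ ∞ (fun x => fderiv ℝ G x (ν x)) := hDG.clm_apply hν
  have hR0 : ContDiff ℝ ∞ R0 :=
    ((hG.comp hm0).sub (hG.comp contDiff_fst)).sub (contDiff_snd.mul (ha.comp contDiff_fst))
  have hR0z : ∀ x ∉ tsupport ν, ∀ s, R0 (x, s) = 0 := by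
    intro x hx s
    simp [R0, image_eq_zero_of_notMem_tsupport hx]
  have hR0d : ∀ x, fderiv ℝ R0 (x, 0) = 0 := by
    intro x
    have h1 : HasFDerivAt (fun p : V × ℝ => p.2 • ν p.1)
        ((0:ℝ) • (fderiv ℝ ν x).comp (ContinuousLinearMap.fst ℝ V ℝ) +
          (ContinuousLinearMap.snd ℝ V ℝ).smulRight (ν x)) (x, (0:ℝ)) :=
      (hasFDerivAt_snd (𝕜 := ℝ) (p := (x, (0:ℝ)))).smul
        (((hν.differentiable (by simp) x).hasFDerivAt).comp (x, (0:ℝ)) hasFDerivAt_fst)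
    have h2 : HasFDerivAt (fun p : V × ℝ => p.1 + p.2 • ν p.1) _ (x, (0:ℝ)) :=
      hasFDerivAt_fst.add h1
    have hg : HasFDerivAt G (fderiv ℝ G x) (x + (0:ℝ) • ν x) := by
      simpa using (hG.differentiable (by simp) x).hasFDerivAt
    have h3 : HasFDerivAt (fun p : V × ℝ => G (p.1 + p.2 • ν p.1)) _ (x, (0:ℝ)) :=
      HasFDerivAt.comp (x, (0:ℝ)) (g := G) hg h2
    have h4 : HasFDerivAt (fun p : V × ℝ => G p.1) _ (x, (0:ℝ)) :=
      HasFDerivAt.comp (x, (0:ℝ)) (g := G) (hG.differentiable (by simp) x).hasFDerivAt hasFDerivAt_fst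
    have h5 : HasFDerivAt (fun p : V × ℝ => fderiv ℝ G p.1 (ν p.1)) _ (x, (0:ℝ)) :=
      HasFDerivAt.comp (x, (0:ℝ)) (g := fun x => fderiv ℝ G x (ν x))
        (ha.differentiable (by simp) x).hasFDerivAt hasFDerivAt_fst
    have h6 := (h3.sub h4).sub ((hasFDerivAt_snd (𝕜 := ℝ) (p := (x, (0:ℝ)))).mul h5)
    have h7 := h6.fderiv
    change fderiv ℝ R0 (x, 0) = _ at h7
    rw [h7]
    refine ContinuousLinearMap.ext fun v => ?_
    simp
    ring
  obtain ⟨δ, hδ, hlipR⟩ := lip_small R0 hR0 (tsupport ν) hνc hR0z hR0d (L / (2 * max 1 Ck))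
    (by positivity)
  obtain ⟨κ, hκ, hκc, hκl, hκb, hκs⟩ := hCk (δ / 2) (by positivity)
  have hκ0 : κ 0 = 0 := hκs 0 (by simp; positivity)
  have hm1 : ContDiff ℝ ∞ (fun p : V × ℝ => κ p.2 • ν p.1) :=
    (hκ.comp contDiff_snd).smul (hν.comp contDiff_fst)
  have hm1c : HasCompactSupport (fun p : V × ℝ => κ p.2 • ν p.1) := by
    refine HasCompactSupport.intro (hνc.isCompact.prod hκc.isCompact) ?_
    rintro ⟨x, s⟩ h
    by_cases hx : x ∈ tsupport ν
    · have : s ∉ tsupport κ := fun hs => h ⟨hx, hs⟩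
      simp [image_eq_zero_of_notMem_tsupport this]
    · simp [image_eq_zero_of_notMem_tsupport hx]
  obtain ⟨M1, hM1⟩ := hm1.lipschitzWith_of_hasCompactSupport hm1c (by simp)
  let m : V × ℝ → V := fun p => p.1 + κ p.2 • ν p.1
  have hmc : ContDiff ℝ ∞ m := contDiff_fst.add hm1
  have hml : LipschitzWith (1 + M1) m := LipschitzWith.prod_fst.add hM1
  -- the approximation
  obtain ⟨ε, hε, hε1, hε2, hε3⟩ : ∃ ε : ℝ≥0, 0 < ε ∧ ε * (1 + M1) ≤ L / 2 ∧ (ε : ℝ) ≤ δ / 8 ∧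
      2 * (ε : ℝ) * B ≤ 1 / 4 := by
    refine ⟨min (L / 2 / (1 + M1)) (min ⟨δ / 8, by positivity⟩ (1 / (8 * (B + 1)))), ?_, ?_, ?_, ?_⟩
    · refine lt_min (by positivity) (lt_min ?_ (by positivity))
      change (0:ℝ) < δ / 8
      positivity
    · calc _ ≤ (L / 2 / (1 + M1)) * (1 + M1) := mul_le_mul_left (min_le_left _ _) _
        _ = L / 2 := div_mul_cancel₀ _ (by positivity)
    · have : min (L / 2 / (1 + M1)) (min ⟨δ / 8, by positivity⟩ (1 / (8 * (B + 1)))) ≤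
        (⟨δ / 8, by positivity⟩ : ℝ≥0) := (min_le_right _ _).trans (min_le_left _ _)
      exact this
    · have : min (L / 2 / (1 + M1)) (min ⟨δ / 8, by positivity⟩ (1 / (8 * (B + 1)))) ≤
        (1 / (8 * (B + 1)) : ℝ≥0) := (min_le_right _ _).trans (min_le_right _ _)
      have h2 : ((min (L / 2 / (1 + M1)) (min ⟨δ / 8, by positivity⟩ (1 / (8 * (B + 1)))) : ℝ≥0) : ℝ)
        ≤ 1 / (8 * (B + 1)) := by exact_mod_cast this
      have hB0 : (0:ℝ) ≤ B := B.2
      calc _ ≤ 2 * (1 / (8 * ((B:ℝ) + 1))) * B := by gcongr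
        _ ≤ 1 / 4 := by
          rw [mul_one_div, div_mul_eq_mul_div, div_le_div_iff₀ (by positivity) (by norm_num)]
          linarith
  obtain ⟨f, R, hR, him, hband, happ, happl⟩ := approx_band G hG hGc ε (by exact_mod_cast hε)
  let fr : V → ℝ := fun x => (f x).re
  have hfr : ContDiff ℝ ∞ fr := Complex.reCLM.contDiff.comp (f.smooth ⊤)
  let W : V → ℝ := fun x => fr x - G x
  have hW : ContDiff ℝ ∞ W := hfr.sub hG
  have hWl : LipschitzWith ε W := LipschitzWith.of_dist_le_mul fun x y => by
    rw [Real.dist_eq, dist_eq_norm]; exact happl x y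
  let q : V × ℝ → V × ℝ := fun p => (p.1, κ p.2)
  have hq : ContDiff ℝ ∞ q := contDiff_fst.prodMk (hκ.comp contDiff_snd)
  have hql : LipschitzWith (max 1 Ck) q := by
    have h2 : LipschitzWith (Ck * 1) (fun p : V × ℝ => κ p.2) := hκl.comp LipschitzWith.prod_snd
    rw [mul_one] at h2
    exact LipschitzWith.prod_fst.prodMk h2
  let T : V × ℝ → ℝ := fun p => R0 (q p) + W (m p)
  have hT : ContDiff ℝ ∞ T := (hR0.comp hq).add (hW.comp hmc)
  have hTl : LipschitzWith L T := by
    have h1 : LipschitzWith (L / 2) (R0 ∘ q) := by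
      have := hlipR.comp (hql.lipschitzOnWith (s := Set.univ)) (by
        intro p _
        refine ⟨trivial, ?_⟩
        rw [mem_closedBall_zero_iff, Real.norm_eq_abs]
        have := hκb p.2
        change |κ p.2| ≤ _
        linarith)
      rw [lipschitzOnWith_univ] at this
      have e : L / (2 * max 1 Ck) * max 1 Ck = L / 2 := by
        have : max 1 Ck ≠ 0 := by positivity
        field_simp
      rwa [e] at this
    have h2 : LipschitzWith (L / 2) (W ∘ m) := (hWl.comp hml).weaken hε1
    have := h1.add h2
    rwa [add_halves] at this
  have hLlt : L < 1 := by
    have : (L:ℝ) < 1 := by linarith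
    exact_mod_cast this
  obtain ⟨s, hs, hsz, hsl, hsb⟩ := implicit_lip T hT L hLlt hTl
  have hT0 : ∀ x, T (x, 0) = W x := by
    intro x
    simp [T, q, m, R0, hκ0]
  have hsb' : ∀ x, |s x| ≤ 2 * ε := by
    intro x
    have h1 := hsb x
    rw [hT0] at h1
    have h2 : |W x| ≤ ε := happ x
    nlinarith [abs_nonneg (s x)]
  have hTS : ∀ x ∈ S, ∀ t, |t| ≤ δ / 2 → t + T (x, t) = fr (x + t • ν x) := by
    intro x hx t ht
    obtain ⟨hx1, hx2⟩ := hS x hx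
    simp only [T, q, m, R0, W, hκs t ht, hx1, hx2]
    ring
  refine ⟨f, R, fun x => s x • ν x, hR, him, hband, hs.smul hν, ?_, ?_⟩
  · refine LipschitzWith.of_dist_le_mul fun x y => ?_
    have e : s x • ν x - s y • ν y = s x • (ν x - ν y) + (s x - s y) • ν y := by
      rw [smul_sub, sub_smul]; abel
    have h1 := hB.dist_le_mul x y
    have h2 := hsl.dist_le_mul x y
    rw [dist_eq_norm] at h1 h2
    rw [dist_eq_norm, e]
    have hd := dist_nonneg (x := x) (y := y)
    have hB0 : (0:ℝ) ≤ B := B.2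
    have hL0' : (0:ℝ) ≤ L := L.2
    calc _ ≤ ‖s x‖ * ‖ν x - ν y‖ + ‖s x - s y‖ * ‖ν y‖ := by
          refine (norm_add_le _ _).trans ?_
          rw [norm_smul, norm_smul]
      _ ≤ (2 * ε) * (B * dist x y) + (L * dist x y) * A := by
          gcongr
          · exact hsb' x
          · exact hA y
      _ = (2 * ε * B + L * A) * dist x y := by ring
      _ ≤ (1/2) * dist x y := mul_le_mul_of_nonneg_right (by linarith) hd
      _ = _ := by simp
  · intro x hx
    have hsx : |s x| < δ / 2 := by
      have := hsb' x
      linarith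
    have hz : fr (x + s x • ν x) = 0 := by rw [← hTS x hx _ hsx.le]; exact hsz x
    refine ⟨Complex.ext hz (him _), fun hd => ?_⟩
    have hfd : HasFDerivAt fr (0 : V →L[ℝ] ℝ) (x + s x • ν x) := by
      have h1 : HasFDerivAt (f : V → ℂ) (0 : V →L[ℝ] ℂ) (x + s x • ν x) := by
        rw [← hd]
        exact (f.differentiable _).hasFDerivAt
      have := Complex.reCLM.hasFDerivAt.comp (x + s x • ν x) h1
      rw [ContinuousLinearMap.comp_zero] at this
      exact this
    have hline : HasDerivAt (fun t : ℝ => x + t • ν x) (ν x) (s x) := by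
      simpa using ((hasDerivAt_id (s x)).smul_const (ν x)).const_add x
    have h1 : HasDerivAt (fun t : ℝ => fr (x + t • ν x)) 0 (s x) := by
      have := hfd.comp_hasDerivAt (s x) hline
      exact this
    have h2 : HasDerivAt (fun t : ℝ => t + T (x, t)) 0 (s x) := by
      refine h1.congr_of_eventuallyEq ?_
      have : ∀ᶠ t in nhds (s x), |t| < δ / 2 :=
        continuous_abs.continuousAt.eventually (gt_mem_nhds hsx)
      filter_upwards [this] with t ht using hTS x hx t ht.le
    have h3 : HasDerivAt (fun t : ℝ => T (x, t)) (-1) (s x) := by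
      have h6 := h2.sub (hasDerivAt_id (s x))
      have e : ((fun t : ℝ => t + T (x, t)) - id) = fun t : ℝ => T (x, t) := by
        funext t; simp
      rw [e, zero_sub] at h6
      exact h6
    have h4 : LipschitzWith (L * 1) (fun t : ℝ => T (x, t)) := hTl.comp (LipschitzWith.prodMk_left x)
    rw [mul_one] at h4
    have h5 := norm_deriv_le_of_lipschitz (x₀ := s x) h4
    rw [h3.deriv] at h5
    simp at h5
    have : (1:ℝ) ≤ L := by exact_mod_cast h5
    linarith

theorem perturb {n : ℕ} (S : Set (En n)) (hS : IsClosedHypersurface S) :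
    ∃ (f : SchwartzMap (En n) ℂ) (R : ℝ) (u : En n → En n), 0 < R ∧ (∀ x, (f x).im = 0) ∧
      (∀ w, R ≤ ‖w‖ → 𝓕 (f : En n → ℂ) w = 0) ∧ ContDiff ℝ ∞ u ∧ LipschitzWith (1/2) u ∧
      ∀ x ∈ S, f (x + u x) = 0 ∧ fderiv ℝ (f : En n → ℂ) (x + u x) ≠ 0 := by
  obtain ⟨hc, g, hg, rfl, hreg⟩ := hS
  obtain ⟨r, hr0, hr⟩ := hc.isBounded.exists_pos_norm_le
  let χ : ContDiffBump (0 : En n) := ⟨r + 1, r + 2, by positivity, by linarith⟩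
  have hDg : ContDiff ℝ ∞ (fderiv ℝ g) := hg.fderiv_right (by simp)
  let gr : En n → En n := fun x => (InnerProductSpace.toDual ℝ (En n)).symm (fderiv ℝ g x)
  have hgr : ContDiff ℝ ∞ gr :=
    (InnerProductSpace.toDual ℝ (En n)).symm.toContinuousLinearEquiv.contDiff.comp hDg
  have hgr2 : ∀ x, fderiv ℝ g x (gr x) = ‖gr x‖ ^ 2 := by
    intro x
    rw [← real_inner_self_eq_norm_sq]
    exact (InnerProductSpace.toDual_symm_apply).symm
  have hgr0 : ∀ x, g x = 0 → gr x ≠ 0 := by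
    intro x hx h
    apply hreg x hx
    simpa [gr] using h
  let den : En n → ℝ := fun x => ‖gr x‖ ^ 2 + g x ^ 2
  have hden : ContDiff ℝ ∞ den := (hgr.norm_sq ℝ).add (hg.pow 2)
  have hden0 : ∀ x, den x ≠ 0 := by
    intro x
    by_cases hx : g x = 0
    · have := norm_pos_iff.2 (hgr0 x hx)
      simp only [den]; positivity
    · simp only [den]; positivity
  refine perturb_core (fun x => χ x * g x) (χ.contDiff.mul hg) χ.hasCompactSupport.mul_right
    (fun x => (χ x / den x) • gr x) ((χ.contDiff.div hden hden0).smul hgr) ?_ _ ?_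
  · have : HasCompactSupport (fun x => χ x • ((den x)⁻¹ • gr x)) := χ.hasCompactSupport.smul_right
    simpa only [smul_smul, ← div_eq_mul_inv] using this
  · intro x hx
    have hx0 : g x = 0 := hx
    have hmem : x ∈ Metric.ball (0 : En n) χ.rIn := by
      rw [mem_ball_zero_iff]
      have := hr x hx
      change _ < r + 1
      linarith
    have h1 : (fun x => χ x * g x) =ᶠ[nhds x] g := by
      filter_upwards [Metric.isOpen_ball.mem_nhds hmem] with y hy
      rw [χ.one_of_mem_closedBall (Metric.ball_subset_closedBall hy), one_mul]
    refine ⟨by simp [hx0], ?_⟩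
    rw [h1.fderiv_eq, map_smul, hgr2, χ.one_of_mem_closedBall (Metric.ball_subset_closedBall hmem)]
    have := norm_pos_iff.2 (hgr0 x hx)
    simp only [den, hx0, smul_eq_mul]
    field_simp
    simp

theorem isDiffeo_comp {n : ℕ} {φ₁ φ₂ : En n → En n} (h1 : IsDiffeo φ₁) (h2 : IsDiffeo φ₂) :
    IsDiffeo (fun x => φ₁ (φ₂ x)) := by
  obtain ⟨ψ₁, a1, b1, c1, d1⟩ := h1
  obtain ⟨ψ₂, a2, b2, c2, d2⟩ := h2
  exact ⟨fun x => ψ₂ (ψ₁ x), a1.comp a2, b2.comp b1, fun x => by simp [c1 _, c2 _],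
    fun x => by simp [d1 _, d2 _]⟩

theorem isDiffeo_smul {n : ℕ} (c : ℝ) (hc : c ≠ 0) : IsDiffeo (fun x : En n => c • x) :=
  ⟨fun x => c⁻¹ • x, contDiff_const_smul c, contDiff_const_smul c⁻¹,
    fun x => inv_smul_smul₀ hc x, fun x => smul_inv_smul₀ hc x⟩

theorem hypersurface_image {n : ℕ} {S : Set (En n)} (hS : IsClosedHypersurface S)
    {φ : En n → En n} (hφ : IsDiffeo φ) : IsClosedHypersurface (φ '' S) := by
  obtain ⟨ψ, hφ1, hψ, hl, hr⟩ := hφ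
  obtain ⟨hc, g, hg, rfl, hreg⟩ := hS
  refine ⟨hc.image hφ1.continuous, g ∘ ψ, hg.comp hψ, ?_, ?_⟩
  · ext y
    constructor
    · rintro ⟨x, hx, rfl⟩
      simpa [hl x] using hx
    · intro hy
      exact ⟨ψ y, hy, hr y⟩
  · rintro _ ⟨x, hx, rfl⟩ h
    apply hreg x hx
    have hd1 : HasFDerivAt (g ∘ ψ) (0 : En n →L[ℝ] ℝ) (φ x) := by
      rw [← h]
      exact ((hg.comp hψ).differentiable (by simp) _).hasFDerivAt
    have h2 := hd1.comp x (hφ1.differentiable (by simp) x).hasFDerivAt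
    have e : (g ∘ ψ) ∘ φ = g := by funext y; simp [hl y]
    rw [e, ContinuousLinearMap.zero_comp] at h2
    exact h2.fderiv

theorem fourier_comp_smul {n : ℕ} (f : En n → ℂ) (c : ℝ) (hc : c ≠ 0) (w : En n) :
    𝓕 (fun x => f (c • x)) w = |(c ^ (Module.finrank ℝ (En n)))⁻¹| • 𝓕 f (c⁻¹ • w) := by
  rw [Real.fourier_eq, Real.fourier_eq, ← MeasureTheory.Measure.integral_comp_smul]
  congr 1
  funext v
  rw [inner_smul_left, inner_smul_right]
  congr 3
  simp
  field_simp

/-- Given a closed hypersurface `Σ` of `ℝⁿ` and a bounded measurable `K ⊆ ℝⁿ`,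
symmetric about the origin and containing the origin in its interior, there is a hypersurface
`Σ'` isotopic to `Σ` and a real-valued Schwartz function `f` whose Fourier transform has
compact support contained in `K`, vanishing transversally along `Σ'`. -/
theorem stmt1 {n : ℕ} (S : Set (En n)) (hS : IsClosedHypersurface S)
    (K : Set (En n)) (hKb : Bornology.IsBounded K) (hKm : MeasurableSet K)
    (hsym : ∀ ξ ∈ K, -ξ ∈ K) (h0 : (0 : En n) ∈ interior K) :
    ∃ (S' : Set (En n)) (f : SchwartzMap (En n) ℂ),
      IsClosedHypersurface S' ∧ Isotopic S S' ∧
      (∀ x, (f x).im = 0) ∧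
      HasCompactSupport (𝓕 (f : En n → ℂ)) ∧
      tsupport (𝓕 (f : En n → ℂ)) ⊆ K ∧
      (∀ x ∈ S', f x = 0 ∧ fderiv ℝ (f : En n → ℂ) x ≠ 0) := by
  obtain ⟨f, R, u, hR, him, hband, hu, hul, hz⟩ := perturb S hS
  obtain ⟨ρ, hρ, hρK⟩ := Metric.nhds_basis_closedBall.mem_iff.1 (mem_interior_iff_mem_nhds.1 h0)
  let c : ℝ := ρ / R
  have hc : 0 < c := by positivity
  have hdu : ∀ t ∈ Set.Icc (0:ℝ) 1, IsDiffeo (fun x => x + t • u x) := by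
    intro t ht
    have hsm : ContDiff ℝ ∞ (fun x => t • u x) := (contDiff_const_smul t).comp hu
    obtain ⟨ψ, h1, h2, h3⟩ := diffeo_of_lip (fun x => t • u x) hsm
      (1/2) (by rw [← NNReal.coe_lt_coe]; norm_num) (by
        refine LipschitzWith.of_dist_le_mul fun x y => ?_
        have h := hul.dist_le_mul x y
        rw [dist_smul₀, Real.norm_of_nonneg ht.1]
        exact (mul_le_of_le_one_left dist_nonneg ht.2).trans h)
    exact ⟨ψ, contDiff_id.add hsm, h1, h2, h3⟩
  let φ : ℝ → En n → En n := fun t x => (1 + t * (c⁻¹ - 1)) • (x + t • u x)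
  have hφ : ∀ t ∈ Set.Icc (0:ℝ) 1, IsDiffeo (φ t) := by
    intro t ht
    refine isDiffeo_comp (isDiffeo_smul _ ?_) (hdu t ht)
    have h1 : 0 < c⁻¹ := inv_pos.2 hc
    rcases eq_or_lt_of_le ht.1 with h | h
    · rw [← h]; simp
    · have : 0 < t * c⁻¹ := by positivity
      have := ht.2
      have : 0 < 1 + t * (c⁻¹ - 1) := by linarith
      exact this.ne'
  have hφ1 : ∀ x, c • φ 1 x = x + u x := by
    intro x
    simp only [φ, one_mul, one_smul, add_sub_cancel]
    exact smul_inv_smul₀ hc.ne' _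
  let e : En n ≃L[ℝ] En n := ContinuousLinearEquiv.smulLeft (Units.mk0 c hc.ne')
  have he : ∀ x, e x = c • x := fun x => rfl
  let F : SchwartzMap (En n) ℂ := SchwartzMap.compCLMOfContinuousLinearEquiv ℂ e f
  have hF : ∀ x, F x = f (c • x) := fun x => rfl
  have hsub : tsupport (𝓕 (F : En n → ℂ)) ⊆ Metric.closedBall 0 ρ := by
    refine closure_minimal ?_ Metric.isClosed_closedBall
    intro w hw
    by_contra hcon
    apply hw
    rw [mem_closedBall_zero_iff, not_le] at hcon
    have e1 : (F : En n → ℂ) = fun x => f (c • x) := rfl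
    rw [e1, fourier_comp_smul _ c hc.ne', hband, smul_zero]
    rw [norm_smul, norm_inv, Real.norm_of_nonneg hc.le]
    simp only [c]
    rw [inv_div, div_mul_eq_mul_div, le_div_iff₀ hρ]
    exact mul_le_mul_of_nonneg_left hcon.le hR.le
  refine ⟨φ 1 '' S, F, hypersurface_image hS (hφ 1 (by simp)), ⟨φ, ?_, hφ, ?_, rfl⟩,
    fun x => him _, ?_, hsub.trans hρK, ?_⟩
  · have := hu.continuous
    fun_prop
  · funext x
    simp [φ]
  · exact HasCompactSupport.of_support_subset_isCompact (isCompact_closedBall 0 ρ)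
      ((subset_tsupport _).trans hsub)
  · rintro _ ⟨x, hx, rfl⟩
    obtain ⟨hz1, hz2⟩ := hz x hx
    refine ⟨by rw [hF, hφ1, hz1], fun hd => hz2 ?_⟩
    have e1 : (F : En n → ℂ) = (f : En n → ℂ) ∘ e := rfl
    rw [e1, ContinuousLinearEquiv.comp_right_fderiv, he, hφ1] at hd
    ext v
    have := congrArg (fun A : En n →L[ℝ] ℂ => A (e.symm v)) hd
    simpa using this

end
end

section
/- Let Q(x) = Σ_I a_I x^I be a polynomial on ℝⁿ, q(x) = Q(x)e^{-‖x‖²/2}, and for c, η > 0 let q^c_η = F⁻¹( χ̃_c(η ξ) F(q) ) where χ̃_c : ℝⁿ → [0,1] is smooth, supported in B(0,c), and equal to 1 on B(0,c/2). Then ‖q^c_η − q‖_{L^∞(ℝⁿ)} ≤ √(⌊n/2+1⌋) · (c/(2η))^{(n−2)/2} · e^{−(1/4)(c/(2η))²} · Σ_I |a_I| √(I!). -/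
open scoped RealInnerProductSpace

noncomputable section

/-- The Fourier transform with the convention `F(f)(ξ) = ∫ e^{-i⟨x,ξ⟩} f(x) dx`. -/
def Fn {n : ℕ} (f : EuclideanSpace ℝ (Fin n) → ℂ) (ξ : EuclideanSpace ℝ (Fin n)) : ℂ :=
  ∫ x : EuclideanSpace ℝ (Fin n), Complex.exp (-Complex.I * (⟪x, ξ⟫ : ℝ)) * f x

open MeasureTheory Polynomial in
theorem aux_int_poly (p : ℝ[X]) : Integrable fun x : ℝ => p.eval x * Real.exp (-x ^ 2 / 2) := by
  induction p using Polynomial.induction_on' with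
  | add p q hp hq =>
    refine (hp.add hq).congr (Filter.Eventually.of_forall fun x => ?_)
    simp only [Pi.add_apply, eval_add]; ring
  | monomial k a =>
    have h := integrable_rpow_mul_exp_neg_mul_sq (b := 1 / 2) (by norm_num) (s := k)
      (by have : (0:ℝ) ≤ k := Nat.cast_nonneg k
          linarith)
    refine (h.const_mul a).congr (Filter.Eventually.of_forall fun x => ?_)
    simp only [eval_monomial, Real.rpow_natCast]
    rw [show -(1 / 2 : ℝ) * x ^ 2 = -x ^ 2 / 2 by ring]; ring

open Polynomial in
/-- Hermite polynomials over the reals -/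
def auxH (k : ℕ) : ℝ[X] := (hermite k).map (Int.castRingHom ℝ)

open Polynomial in
theorem auxH_zero : auxH 0 = 1 := by simp [auxH]

open Polynomial in
theorem auxH_succ (k : ℕ) : auxH (k + 1) = X * auxH k - derivative (auxH k) := by
  simp [auxH, hermite_succ, derivative_map]

open Polynomial in
theorem auxH_deriv (k : ℕ) : derivative (auxH (k + 1)) = ((k : ℝ[X]) + 1) * auxH k := by
  induction k with
  | zero => simp [auxH_succ, auxH_zero]
  | succ k ih =>
    rw [auxH_succ (k + 1), derivative_sub, derivative_mul, ih, derivative_mul]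
    have h1 : derivative (((k : ℝ[X]) + 1)) = 0 := by simp
    rw [h1, derivative_X, auxH_succ k]
    push_cast; ring

theorem aux_gauss_deriv (x : ℝ) :
    HasDerivAt (fun x : ℝ => Real.exp (-x ^ 2 / 2)) (-x * Real.exp (-x ^ 2 / 2)) x := by
  have h : HasDerivAt (fun x : ℝ => -x ^ 2 / 2) (-x) x := by
    have := ((hasDerivAt_pow 2 x).neg.div_const 2)
    convert! this using 1
    norm_num; ring
  convert h.exp using 1; ring

theorem aux_gauss_int : ∫ x : ℝ, Real.exp (-x ^ 2 / 2) = Real.sqrt (2 * Real.pi) := by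
  have := integral_gaussian (1 / 2)
  rw [show Real.pi / (1 / 2) = 2 * Real.pi by ring] at this
  rw [← this]
  congr 1; ext x; congr 1; ring

open MeasureTheory Polynomial in
theorem auxH_norm (k : ℕ) : ∫ x : ℝ, (auxH k).eval x ^ 2 * Real.exp (-x ^ 2 / 2)
    = (k.factorial : ℝ) * Real.sqrt (2 * Real.pi) := by
  induction k with
  | zero => simp [auxH_zero, aux_gauss_int]
  | succ k ih =>
    have key : ∫ x : ℝ, (derivative (auxH (k+1) * auxH k) - X * (auxH (k+1) * auxH k)).eval x
        * Real.exp (-x ^ 2 / 2) = 0 := by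
      refine integral_eq_zero_of_hasDerivAt_of_integrable
        (f := fun x => (auxH (k+1) * auxH k).eval x * Real.exp (-x ^ 2 / 2)) (fun x => ?_)
        (aux_int_poly _) (aux_int_poly _)
      convert! ((auxH (k+1) * auxH k).hasDerivAt x).mul (aux_gauss_deriv x) using 1
      simp only [eval_sub, eval_mul, eval_X]; ring
    have e : derivative (auxH (k+1) * auxH k) - X * (auxH (k+1) * auxH k)
       = C ((k : ℝ) + 1) * auxH k ^ 2 - auxH (k+1) ^ 2 := by
      rw [derivative_mul, auxH_deriv]
      have := auxH_succ k
      have h2 : derivative (auxH k) = X * auxH k - auxH (k+1) := by rw [this]; ring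
      rw [h2]; simp; ring
    rw [e] at key
    have h1 := aux_int_poly (C ((k : ℝ) + 1) * auxH k ^ 2)
    have h2 := aux_int_poly (auxH (k+1) ^ 2)
    simp only [eval_sub, sub_mul] at key
    rw [integral_sub h1 h2] at key
    simp only [eval_mul, eval_C, eval_pow, mul_assoc] at key
    rw [integral_const_mul, ih] at key
    rw [Nat.factorial_succ]; push_cast; linarith

open MeasureTheory in
theorem aux_int_c (k : ℕ) (ξ : ℝ) : Integrable fun x : ℝ =>
    Complex.exp (-Complex.I * ((x * ξ : ℝ) : ℂ)) * ((x ^ k * Real.exp (-x ^ 2 / 2) : ℝ) : ℂ) := by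
  have h := (aux_int_poly (Polynomial.X ^ k)).ofReal (𝕜 := ℂ)
  refine (h.bdd_mul (c := 1) (f := fun x : ℝ => Complex.exp (-Complex.I * ((x * ξ : ℝ) : ℂ)))
    (by fun_prop) (Filter.Eventually.of_forall fun x => ?_)).congr
    (Filter.Eventually.of_forall fun x => ?_)
  · rw [Complex.norm_exp]; simp
  · simp

open MeasureTheory in
theorem aux_fourier_one (k : ℕ) (ξ : ℝ) :
    ∫ x : ℝ, Complex.exp (-Complex.I * ((x * ξ : ℝ) : ℂ)) *
      ((x ^ k * Real.exp (-x ^ 2 / 2) : ℝ) : ℂ)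
    = (-Complex.I) ^ k *
      ((Real.sqrt (2 * Real.pi) * ((auxH k).eval ξ * Real.exp (-ξ ^ 2 / 2)) : ℝ) : ℂ) := by
  have base : ∀ ξ : ℝ, ∫ x : ℝ, Complex.exp (-Complex.I * ((x * ξ : ℝ) : ℂ)) *
      ((x ^ 0 * Real.exp (-x ^ 2 / 2) : ℝ) : ℂ) =
      ((Real.sqrt (2 * Real.pi) * Real.exp (-ξ ^ 2 / 2) : ℝ) : ℂ) := by
    intro ξ
    have := fourierIntegral_gaussian (b := 1 / 2) (by norm_num) (-ξ)
    have e2 : ((Real.pi : ℂ) / (1 / 2)) ^ (1 / 2 : ℂ) = ((Real.sqrt (2 * Real.pi) : ℝ) : ℂ) := by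
      rw [Real.sqrt_eq_rpow, Complex.ofReal_cpow (by positivity)]
      congr 1 <;> push_cast <;> ring
    rw [e2] at this
    push_cast at this ⊢
    rw [show (-(ξ:ℂ) ^ 2 / 2) = -(-(ξ:ℂ)) ^ 2 / (4 * (1 / 2)) by ring, ← this]
    congr 1; ext x
    rw [pow_zero, one_mul]
    congr 2 <;> ring
  have hrec : ∀ k : ℕ, ∀ ξ : ℝ, ∫ x : ℝ, Complex.exp (-Complex.I * ((x * ξ : ℝ) : ℂ)) *
      ((x ^ (k+1) * Real.exp (-x ^ 2 / 2) : ℝ) : ℂ) =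
      k * (∫ x : ℝ, Complex.exp (-Complex.I * ((x * ξ : ℝ) : ℂ)) *
      ((x ^ (k-1) * Real.exp (-x ^ 2 / 2) : ℝ) : ℂ)) - Complex.I * ξ *
      (∫ x : ℝ, Complex.exp (-Complex.I * ((x * ξ : ℝ) : ℂ)) *
      ((x ^ k * Real.exp (-x ^ 2 / 2) : ℝ) : ℂ)) := by
    intro k ξ
    have i1 := (aux_int_c (k-1) ξ).const_mul (k : ℂ)
    have i2 := (aux_int_c k ξ).const_mul (Complex.I * ξ)
    have i3 := aux_int_c (k+1) ξ
    have key := integral_eq_zero_of_hasDerivAt_of_integrable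
      (f := fun x : ℝ => Complex.exp (-Complex.I * ((x * ξ : ℝ) : ℂ)) *
        ((x ^ k * Real.exp (-x ^ 2 / 2) : ℝ) : ℂ)) (fun x => ?_)
        ((i1.sub i2).sub i3) (aux_int_c k ξ)
    · simp only [Pi.sub_apply] at key
      rw [integral_sub, integral_sub i1 i2, integral_const_mul, integral_const_mul] at key
      · linear_combination -key
      · exact i1.sub i2
      · exact i3
    · have d1 : HasDerivAt (fun x : ℝ => Complex.exp (-Complex.I * ((x * ξ : ℝ) : ℂ)))
          (Complex.exp (-Complex.I * ((x * ξ : ℝ) : ℂ)) * (-Complex.I * ξ)) x := by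
        have := (((hasDerivAt_id x).mul_const ξ).ofReal_comp.const_mul (-Complex.I)).cexp
        simpa using this
      have d2 := (((hasDerivAt_pow k x).mul (aux_gauss_deriv x)).ofReal_comp)
      convert! d1.mul d2 using 1
      simp only [Pi.sub_apply, Pi.mul_apply]
      push_cast; ring
  induction k using Nat.twoStepInduction generalizing ξ with
  | zero => rw [base]; simp [auxH_zero]
  | one => rw [hrec 0, base]; simp [auxH_zero, auxH_succ]; ring
  | more k h1 h2 =>
    rw [hrec (k+1), Nat.add_sub_cancel, h1, h2, auxH_succ (k+1), auxH_deriv]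
    simp only [Polynomial.eval_sub, Polynomial.eval_mul, Polynomial.eval_X, Polynomial.eval_add,
      Polynomial.eval_natCast, Polynomial.eval_one]
    push_cast
    have hI : (-Complex.I) ^ (k+1+1) = -(-Complex.I) ^ k := by
      rw [pow_succ, pow_succ, mul_assoc]; simp
    rw [hI, pow_succ (-Complex.I) k]
    linear_combination (-(-Complex.I)^k * (√(2 * Real.pi) : ℂ)  * ξ * (((auxH (k+1)).eval ξ : ℝ) : ℂ) * Complex.exp (-(ξ:ℂ)^2/2)) * (-Complex.I_sq)

/-- Radial gaussian tail. -/
def auxJ (n : ℕ) (R : ℝ) : ℝ := ∫ r in Set.Ioi R, r ^ (n - 1) * Real.exp (-r ^ 2 / 2)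

open MeasureTheory in
theorem aux_int_pow (k : ℕ) : Integrable fun x : ℝ => x ^ k * Real.exp (-x ^ 2 / 2) := by
  simpa using aux_int_poly (Polynomial.X ^ k)

open MeasureTheory in
theorem aux_ibp (k : ℕ) (R : ℝ) :
    ∫ r in Set.Ioi R, ((k : ℝ) * (r ^ (k - 1) * Real.exp (-r ^ 2 / 2))
      - r ^ (k + 1) * Real.exp (-r ^ 2 / 2)) = - (R ^ k * Real.exp (-R ^ 2 / 2)) := by
  have hd : ∀ x : ℝ, HasDerivAt (fun x : ℝ => x ^ k * Real.exp (-x ^ 2 / 2))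
      ((k : ℝ) * (x ^ (k - 1) * Real.exp (-x ^ 2 / 2))
      - x ^ (k + 1) * Real.exp (-x ^ 2 / 2)) x := by
    intro x
    convert! (hasDerivAt_pow k x).mul (aux_gauss_deriv x) using 1
    ring
  have hi : IntegrableOn (fun x : ℝ => (k : ℝ) * (x ^ (k - 1) * Real.exp (-x ^ 2 / 2))
      - x ^ (k + 1) * Real.exp (-x ^ 2 / 2)) (Set.Ioi R) :=
    (((aux_int_pow (k-1)).const_mul _).sub (aux_int_pow (k+1))).integrableOn
  have ht := tendsto_zero_of_hasDerivAt_of_integrableOn_Ioi (fun x _ => hd x) hi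
    (aux_int_pow k).integrableOn
  rw [integral_Ioi_of_hasDerivAt_of_tendsto' (fun x _ => hd x) hi ht]
  ring

open MeasureTheory in
theorem auxJ_rec (n : ℕ) (hn : 0 < n) (R : ℝ) :
    auxJ (n + 2) R = R ^ n * Real.exp (-R ^ 2 / 2) + n * auxJ n R := by
  have h := aux_ibp n R
  rw [integral_sub ((aux_int_pow _).integrableOn.const_mul _) (aux_int_pow _).integrableOn,
    integral_const_mul] at h
  unfold auxJ
  rw [show n + 2 - 1 = n + 1 by omega]
  linarith

open MeasureTheory in
theorem auxJ_two (R : ℝ) : auxJ 2 R = Real.exp (-R ^ 2 / 2) := by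
  have h := aux_ibp 0 R
  simp [integral_neg] at h
  simpa [auxJ] using h

theorem auxJ_one_zero : auxJ 1 0 = Real.sqrt (Real.pi / 2) := by
  have h := integral_gaussian_Ioi (1 / 2)
  have e : √(Real.pi / (1 / 2)) / 2 = √(Real.pi / 2) := by
    rw [show Real.pi / (1 / 2) = 2 ^ 2 * (Real.pi / 2) by ring, Real.sqrt_mul (by norm_num)]
    simp
  rw [← e, ← h]
  simp only [auxJ, Nat.sub_self, pow_zero, one_mul]
  congr 1; ext x; congr 1; ring

theorem auxJ_zero_ge (n : ℕ) (hn : 0 < n) : 1 ≤ auxJ n 0 := by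
  induction n using Nat.twoStepInduction with
  | zero => omega
  | one =>
    rw [auxJ_one_zero, Real.one_le_sqrt]
    linarith [Real.pi_gt_three]
  | more n h1 h2 =>
    rcases Nat.eq_zero_or_pos n with rfl | h
    · simp [auxJ_two]
    · rw [auxJ_rec n h]
      have := h1 h
      have h' : (1:ℝ) ≤ n := by exact_mod_cast h
      rw [zero_pow (by omega)]
      nlinarith

open MeasureTheory in
theorem auxJ_tail (n : ℕ) (hn : 0 < n) (R : ℝ) (hR : 1 ≤ R) :
    auxJ n R ≤ auxJ n 0 * (((n / 2 + 1 : ℕ) : ℝ) * R ^ ((n : ℝ) - 2) * Real.exp (-R ^ 2 / 2)) := by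
  have hR0 : 0 < R := by linarith
  induction n using Nat.twoStepInduction with
  | zero => omega
  | one =>
    have h1 : auxJ 1 R ≤ R⁻¹ * auxJ 2 R := by
      unfold auxJ
      rw [← integral_const_mul]
      refine setIntegral_mono_on (aux_int_pow _).integrableOn
        ((aux_int_pow _).integrableOn.const_mul _) measurableSet_Ioi fun x hx => ?_
      have hx' : R < x := hx
      have : 1 ≤ R⁻¹ * x := by rw [inv_mul_eq_div, one_le_div hR0]; exact hx'.le
      simp only [Nat.sub_self, pow_zero, one_mul, Nat.add_one_sub_one, pow_one]
      have := Real.exp_pos (-x ^ 2 / 2)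
      rw [← mul_assoc]; nlinarith
    rw [auxJ_two] at h1
    have h2 := auxJ_zero_ge 1 one_pos
    have e : R ^ (((1 : ℕ) : ℝ) - 2) = R⁻¹ := by
      rw [← Real.rpow_neg_one]; norm_num
    rw [e]
    refine h1.trans ?_
    have : 0 < R⁻¹ * Real.exp (-R ^ 2 / 2) := by positivity
    norm_num
    nlinarith
  | more n h1 h2 =>
    have e : R ^ (((n + 2 : ℕ) : ℝ) - 2) = R ^ n := by
      rw [← Real.rpow_natCast]; push_cast; congr 1; ring
    rw [e]
    have hE := Real.exp_pos (-R ^ 2 / 2)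
    have hRn : 1 ≤ R ^ n := one_le_pow₀ hR
    rcases Nat.eq_zero_or_pos n with rfl | h
    · simp [auxJ_two]; linarith
    · have h3 := h1 h
      have h4 := auxJ_zero_ge n h
      have h' : (1:ℝ) ≤ n := by exact_mod_cast h
      have e0 : auxJ (n + 2) 0 = n * auxJ n 0 := by
        rw [auxJ_rec n h, zero_pow (by omega)]; ring
      have h5 : R ^ ((n : ℝ) - 2) ≤ R ^ n := by
        rw [← Real.rpow_natCast]
        exact Real.rpow_le_rpow_of_exponent_le hR (by linarith)
      rw [e0, auxJ_rec n h, show (n + 2) / 2 = n / 2 + 1 by omega]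
      push_cast
      push_cast at h3
      set K : ℝ := ((n / 2 : ℕ) : ℝ)
      have hK : 0 ≤ K := Nat.cast_nonneg _
      have h6 : auxJ n R ≤ auxJ n 0 * ((K + 1) * R ^ n * Real.exp (-R ^ 2 / 2)) := by
        refine h3.trans ?_
        gcongr
      have h7 : R ^ n * Real.exp (-R ^ 2 / 2) ≤
          n * auxJ n 0 * (R ^ n * Real.exp (-R ^ 2 / 2)) := by
        apply le_mul_of_one_le_left (by positivity)
        nlinarith
      nlinarith [mul_le_mul_of_nonneg_left h6 (by linarith : (0:ℝ) ≤ n)]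

theorem aux_exp_norm {n : ℕ} (x : EuclideanSpace ℝ (Fin n)) :
    Real.exp (-‖x‖ ^ 2 / 2) = ∏ j, Real.exp (-(x j) ^ 2 / 2) := by
  rw [← Real.exp_sum, EuclideanSpace.real_norm_sq_eq, ← Finset.sum_div, Finset.sum_neg_distrib]

open MeasureTheory in
theorem aux_prod_integrable {n : ℕ} {𝕜 : Type*} [RCLike 𝕜] (f : Fin n → ℝ → 𝕜)
    (hf : ∀ j, Integrable (f j)) :
    Integrable (fun x : EuclideanSpace ℝ (Fin n) => ∏ j, f j (x j)) :=
  ((PiLp.volume_preserving_ofLp (Fin n)).integrable_comp_emb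
    (MeasurableEquiv.toLp 2 (Fin n → ℝ)).symm.measurableEmbedding
    (g := fun x : Fin n → ℝ => ∏ j, f j (x j))).2 (Integrable.fintype_prod hf)

open MeasureTheory in
theorem aux_prod_integral {n : ℕ} {𝕜 : Type*} [RCLike 𝕜] (f : Fin n → ℝ → 𝕜) :
    ∫ x : EuclideanSpace ℝ (Fin n), ∏ j, f j (x j) = ∏ j, ∫ t, f j t := by
  rw [← integral_fintype_prod_volume_eq_prod]
  exact (PiLp.volume_preserving_ofLp (Fin n)).integral_comp
    (MeasurableEquiv.toLp 2 (Fin n → ℝ)).symm.measurableEmbedding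
    (fun x : Fin n → ℝ => ∏ j, f j (x j))

theorem aux_mono_prod {n : ℕ} (I : Fin n → ℕ) (x : EuclideanSpace ℝ (Fin n)) :
    (∏ j, x j ^ I j) * Real.exp (-‖x‖ ^ 2 / 2) = ∏ j, (x j ^ I j * Real.exp (-(x j) ^ 2 / 2)) := by
  rw [aux_exp_norm, Finset.prod_mul_distrib]

open MeasureTheory in
theorem aux_mono_integrable {n : ℕ} (I : Fin n → ℕ) :
    Integrable (fun x : EuclideanSpace ℝ (Fin n) =>
      (∏ j, x j ^ I j) * Real.exp (-‖x‖ ^ 2 / 2)) := by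
  simp_rw [aux_mono_prod]
  exact aux_prod_integrable (fun j t => t ^ I j * Real.exp (-t ^ 2 / 2)) fun j => aux_int_pow _

/-- multivariate Hermite polynomial -/
def auxG {n : ℕ} (I : Fin n → ℕ) (ξ : EuclideanSpace ℝ (Fin n)) : ℝ := ∏ j, (auxH (I j)).eval (ξ j)

open MeasureTheory in
theorem auxG_integrable {n : ℕ} (I : Fin n → ℕ) :
    Integrable (fun x : EuclideanSpace ℝ (Fin n) => auxG I x * Real.exp (-‖x‖ ^ 2 / 2)) := by
  simp_rw [aux_exp_norm, auxG, ← Finset.prod_mul_distrib]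
  exact aux_prod_integrable (fun j t => (auxH (I j)).eval t * Real.exp (-t ^ 2 / 2))
    fun j => aux_int_poly _

open MeasureTheory in
theorem auxG_sq_integrable {n : ℕ} (I : Fin n → ℕ) :
    Integrable (fun x : EuclideanSpace ℝ (Fin n) => auxG I x ^ 2 * Real.exp (-‖x‖ ^ 2 / 2)) := by
  simp_rw [aux_exp_norm, auxG, ← Finset.prod_pow, ← Finset.prod_mul_distrib]
  refine aux_prod_integrable (fun j t => (auxH (I j)).eval t ^ 2 * Real.exp (-t ^ 2 / 2))
    fun j => ?_
  refine (aux_int_poly (auxH (I j) ^ 2)).congr (Filter.Eventually.of_forall fun x => ?_)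
  simp only [Polynomial.eval_pow]

open MeasureTheory in
theorem auxG_sq_integral {n : ℕ} (I : Fin n → ℕ) :
    ∫ x : EuclideanSpace ℝ (Fin n), auxG I x ^ 2 * Real.exp (-‖x‖ ^ 2 / 2) =
      (∏ j, (Nat.factorial (I j) : ℝ)) * Real.sqrt (2 * Real.pi) ^ n := by
  simp_rw [aux_exp_norm, auxG, ← Finset.prod_pow, ← Finset.prod_mul_distrib]
  rw [aux_prod_integral (fun j t => (auxH (I j)).eval t ^ 2 * Real.exp (-t ^ 2 / 2))]
  simp_rw [auxH_norm]
  rw [Finset.prod_mul_distrib]; simp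

open MeasureTheory in
theorem aux_fourier_mono {n : ℕ} (I : Fin n → ℕ) (ξ : EuclideanSpace ℝ (Fin n)) :
    ∫ x : EuclideanSpace ℝ (Fin n), Complex.exp (-Complex.I * (⟪x, ξ⟫ : ℝ)) *
      (((∏ j, x j ^ I j) * Real.exp (-‖x‖ ^ 2 / 2) : ℝ) : ℂ) =
    (∏ j, (-Complex.I) ^ I j) *
      ((Real.sqrt (2 * Real.pi) ^ n * (auxG I ξ * Real.exp (-‖ξ‖ ^ 2 / 2)) : ℝ) : ℂ) := by
  have e : ∀ x : EuclideanSpace ℝ (Fin n), Complex.exp (-Complex.I * (⟪x, ξ⟫ : ℝ)) *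
      (((∏ j, x j ^ I j) * Real.exp (-‖x‖ ^ 2 / 2) : ℝ) : ℂ) =
      ∏ j, (Complex.exp (-Complex.I * ((x j * ξ j : ℝ) : ℂ)) *
        ((x j ^ I j * Real.exp (-(x j) ^ 2 / 2) : ℝ) : ℂ)) := by
    intro x
    rw [aux_mono_prod, Finset.prod_mul_distrib (f := fun j => Complex.exp (-Complex.I * ((x j * ξ j : ℝ) : ℂ))),
      ← Complex.exp_sum, ← Finset.mul_sum, Complex.ofReal_prod, ← Complex.ofReal_sum]
    congr 4
    rw [PiLp.inner_apply]
    simp [mul_comm]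
  simp_rw [e]
  rw [aux_prod_integral (fun j t => Complex.exp (-Complex.I * ((t * ξ j : ℝ) : ℂ)) *
        ((t ^ I j * Real.exp (-t ^ 2 / 2) : ℝ) : ℂ))]
  simp_rw [aux_fourier_one]
  rw [Finset.prod_mul_distrib, ← Complex.ofReal_prod, Finset.prod_mul_distrib,
    Finset.prod_mul_distrib, aux_exp_norm, auxG]
  simp

open MeasureTheory in
theorem aux_w_integrable (n : ℕ) :
    Integrable (fun x : EuclideanSpace ℝ (Fin n) => Real.exp (-‖x‖ ^ 2 / 2)) := by
  simpa using aux_mono_integrable (n := n) 0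

open MeasureTheory in
theorem aux_tail (n : ℕ) (hn : 0 < n) (R : ℝ) (hR : 1 ≤ R) :
    ∫ x in {x : EuclideanSpace ℝ (Fin n) | R ≤ ‖x‖}, Real.exp (-‖x‖ ^ 2 / 2) ≤
      Real.sqrt (2 * Real.pi) ^ n *
      (((n / 2 + 1 : ℕ) : ℝ) * R ^ ((n : ℝ) - 2) * Real.exp (-R ^ 2 / 2)) := by
  have : Nonempty (Fin n) := ⟨⟨0, hn⟩⟩
  have hfull : ∫ x : EuclideanSpace ℝ (Fin n), Real.exp (-‖x‖ ^ 2 / 2) =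
      Real.sqrt (2 * Real.pi) ^ n := by
    simp_rw [aux_exp_norm]
    rw [aux_prod_integral (fun j t => Real.exp (-t ^ 2 / 2))]
    simp [aux_gauss_int]
  have h1 := integral_fun_norm_addHaar (volume : Measure (EuclideanSpace ℝ (Fin n)))
    (fun r => Real.exp (-r ^ 2 / 2))
  have h2 := integral_fun_norm_addHaar (volume : Measure (EuclideanSpace ℝ (Fin n)))
    ((Set.Ici R).indicator (fun r => Real.exp (-r ^ 2 / 2)))
  have e1 : ∫ x : EuclideanSpace ℝ (Fin n),
      (Set.Ici R).indicator (fun r => Real.exp (-r ^ 2 / 2)) ‖x‖ =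
      ∫ x in {x : EuclideanSpace ℝ (Fin n) | R ≤ ‖x‖}, Real.exp (-‖x‖ ^ 2 / 2) := by
    rw [← integral_indicator (measurableSet_le measurable_const measurable_norm)]
    congr 1
  have e2 : ∫ y in Set.Ioi (0:ℝ), y ^ (n - 1) •
      (Set.Ici R).indicator (fun r => Real.exp (-r ^ 2 / 2)) y = auxJ n R := by
    have : ∀ y : ℝ, y ^ (n - 1) • (Set.Ici R).indicator (fun r => Real.exp (-r ^ 2 / 2)) y =
        (Set.Ici R).indicator (fun r => r ^ (n - 1) * Real.exp (-r ^ 2 / 2)) y := by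
      intro y
      by_cases hy : y ∈ Set.Ici R <;> simp [hy]
    simp_rw [this]
    rw [setIntegral_indicator measurableSet_Ici, Set.inter_eq_right.2
      (fun y hy => by have : R ≤ y := hy
                      show 0 < y
                      linarith), integral_Ici_eq_integral_Ioi]
    rfl
  rw [e1] at h2
  rw [hfull] at h1
  rw [finrank_euclideanSpace_fin] at h1 h2
  rw [e2] at h2
  rw [h1, h2]
  have := auxJ_tail n hn R hR
  simp only [nsmul_eq_mul, smul_eq_mul]
  change (n:ℝ) * (_ * _) ≤ (n:ℝ) * (_ * auxJ n 0) * _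
  rw [mul_assoc, mul_assoc]
  gcongr

open MeasureTheory in
theorem aux_cs (n : ℕ) (hn : 0 < n) (R : ℝ) (hR : 1 ≤ R) (I : Fin n → ℕ) :
    ∫ x in {x : EuclideanSpace ℝ (Fin n) | R ≤ ‖x‖}, |auxG I x| * Real.exp (-‖x‖ ^ 2 / 2) ≤
      Real.sqrt (2 * Real.pi) ^ n * Real.sqrt (∏ j, (Nat.factorial (I j) : ℝ)) *
      (Real.sqrt ((n / 2 + 1 : ℕ) : ℝ) * R ^ (((n : ℝ) - 2) / 2) *
        Real.exp (-(1 / 4) * R ^ 2)) := by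
  set s := {x : EuclideanSpace ℝ (Fin n) | R ≤ ‖x‖} with hs
  have hG : Continuous (auxG I) := by unfold auxG; fun_prop
  have sq1 : ∀ x : EuclideanSpace ℝ (Fin n), (|auxG I x| * Real.exp (-‖x‖ ^ 2 / 4)) ^ 2 =
      auxG I x ^ 2 * Real.exp (-‖x‖ ^ 2 / 2) := by
    intro x
    rw [mul_pow, sq_abs, ← Real.exp_nat_mul]; congr 2; push_cast; ring
  have sq2 : ∀ x : EuclideanSpace ℝ (Fin n), (Real.exp (-‖x‖ ^ 2 / 4)) ^ 2 =
      Real.exp (-‖x‖ ^ 2 / 2) := by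
    intro x
    rw [← Real.exp_nat_mul]; congr 1; push_cast; ring
  have h := integral_mul_le_Lp_mul_Lq_of_nonneg (μ := volume.restrict s) Real.HolderConjugate.two_two
    (f := fun x => |auxG I x| * Real.exp (-‖x‖ ^ 2 / 4)) (g := fun x => Real.exp (-‖x‖ ^ 2 / 4))
    (Filter.Eventually.of_forall fun x => by positivity)
    (Filter.Eventually.of_forall fun x => by positivity)
    (by
      rw [ENNReal.ofReal_ofNat, memLp_two_iff_integrable_sq (by fun_prop)]
      simp_rw [sq1]; exact (auxG_sq_integrable I).integrableOn)
    (by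
      rw [ENNReal.ofReal_ofNat, memLp_two_iff_integrable_sq (by fun_prop)]
      simp_rw [sq2]; exact (aux_w_integrable n).integrableOn)
  simp_rw [Real.rpow_two, sq1, sq2, mul_assoc, ← sq, sq2, ← Real.sqrt_eq_rpow] at h
  refine h.trans ?_
  have hR0 : 0 < R := by linarith
  have i1 : ∫ x in s, auxG I x ^ 2 * Real.exp (-‖x‖ ^ 2 / 2) ≤
      (∏ j, (Nat.factorial (I j) : ℝ)) * Real.sqrt (2 * Real.pi) ^ n := by
    rw [← auxG_sq_integral]
    exact setIntegral_le_integral (auxG_sq_integrable I)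
      (Filter.Eventually.of_forall fun x => by positivity)
  have i2 := aux_tail n hn R hR
  refine (mul_le_mul (Real.sqrt_le_sqrt i1) (Real.sqrt_le_sqrt i2) (Real.sqrt_nonneg _)
    (Real.sqrt_nonneg _)).trans (le_of_eq ?_)
  have hP : (0:ℝ) ≤ ∏ j, (Nat.factorial (I j) : ℝ) := by positivity
  have hR2 : √(R ^ ((n:ℝ) - 2)) = R ^ (((n : ℝ) - 2) / 2) := by
    rw [Real.sqrt_eq_rpow, ← Real.rpow_mul hR0.le]; congr 1; ring
  have hE2 : √(Real.exp (-R ^ 2 / 2)) = Real.exp (-(1 / 4) * R ^ 2) := by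
    rw [← Real.exp_half]; congr 1; ring
  have := Real.mul_self_sqrt (show 0 ≤ √(2 * Real.pi) ^ n by positivity)
  have hW : 0 ≤ √(2 * Real.pi) ^ n := by positivity
  generalize √(2 * Real.pi) ^ n = W at this hW ⊢
  rw [Real.sqrt_mul hP, Real.sqrt_mul hW, Real.sqrt_mul (by positivity),
    Real.sqrt_mul (by positivity), hR2, hE2]
  linear_combination (√(∏ j, (Nat.factorial (I j) : ℝ)) *
      (Real.sqrt ((n / 2 + 1 : ℕ) : ℝ) * R ^ (((n : ℝ) - 2) / 2) *
        Real.exp (-(1 / 4) * R ^ 2))) * this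

open MeasureTheory FourierTransform in
theorem aux_inversion {n : ℕ} (f : EuclideanSpace ℝ (Fin n) → ℂ) (hf : Integrable f)
    (hc : Continuous f) (hF : Integrable (Fn f)) (x : EuclideanSpace ℝ (Fin n)) :
    f x = (1 / (2 * Real.pi) ^ n) * ∫ ξ : EuclideanSpace ℝ (Fin n),
      Fn f ξ * Complex.exp (Complex.I * (⟪x, ξ⟫ : ℝ)) := by
  have e : 𝓕 f = fun w => Fn f ((2 * Real.pi) • w) := by
    ext w
    rw [Real.fourier_eq', Fn]
    congr 1; ext v
    rw [real_inner_smul_right, smul_eq_mul]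
    congr 2; push_cast; ring
  have hF' : Integrable (𝓕 f) := by
    rw [e]; exact hF.comp_smul (by positivity)
  have h := hf.fourierInv_fourier_eq hF' (v := x) hc.continuousAt
  rw [← h, Real.fourierInv_eq', e]
  have h3 := Measure.integral_comp_smul_of_nonneg volume
    (fun ξ : EuclideanSpace ℝ (Fin n) => Fn f ξ * Complex.exp (Complex.I * (⟪x, ξ⟫ : ℝ)))
    (2 * Real.pi) (hR := by positivity)
  rw [finrank_euclideanSpace_fin] at h3
  have e3 : ((((2 * Real.pi) ^ n)⁻¹ : ℝ) : ℂ) = 1 / (2 * Real.pi) ^ n := by push_cast; simp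
  rw [← e3, ← Complex.real_smul, ← h3]
  congr 1; ext v
  rw [real_inner_smul_right, smul_eq_mul, mul_comm, real_inner_comm]
  congr 2; push_cast; ring

/-- `L^∞` bound on `q^c_η − q` where `q = Q e^{-‖x‖²/2}` for a polynomial
`Q = Σ_{I ∈ S} a_I x^I` and `q^c_η = F⁻¹(χ̃_c(ηξ) F(q))`. -/
theorem stmt9 (n : ℕ) (hn : 0 < n)
    (S : Finset (Fin n → ℕ)) (a : (Fin n → ℕ) → ℝ)
    (c η : ℝ) (hc : 0 < c) (hη : 0 < η) (hcη : 1 ≤ c / (2 * η))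
    (χ : EuclideanSpace ℝ (Fin n) → ℝ) (hχ : ContDiff ℝ (⊤ : ℕ∞) χ)
    (hχ01 : ∀ ξ, χ ξ ∈ Set.Icc (0:ℝ) 1)
    (hχsupp : tsupport χ ⊆ Metric.closedBall 0 c)
    (hχ1 : ∀ ξ ∈ Metric.closedBall (0 : EuclideanSpace ℝ (Fin n)) (c / 2), χ ξ = 1)
    (Q q : EuclideanSpace ℝ (Fin n) → ℝ)
    (hQ : Q = fun x => ∑ I ∈ S, a I * ∏ j, x j ^ I j)
    (hq : q = fun x => Q x * Real.exp (-‖x‖ ^ 2 / 2))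
    (qcη : EuclideanSpace ℝ (Fin n) → ℂ)
    (hqcη : qcη = fun x => (1 / (2 * Real.pi) ^ n) *
      ∫ ξ : EuclideanSpace ℝ (Fin n),
        (χ (η • ξ) : ℂ) * Fn (fun y => (q y : ℂ)) ξ * Complex.exp (Complex.I * (⟪x, ξ⟫ : ℝ))) :
    ∀ x, ‖qcη x - (q x : ℂ)‖ ≤
      Real.sqrt ((n / 2 + 1 : ℕ) : ℝ) * (c / (2 * η)) ^ (((n : ℝ) - 2) / 2) *
        Real.exp (-(1 / 4) * (c / (2 * η)) ^ 2) *
        ∑ I ∈ S, |a I| * Real.sqrt (∏ j, (Nat.factorial (I j) : ℝ)) := by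
  have hqe : ∀ y, (q y : ℂ) = ∑ I ∈ S, (a I : ℂ) *
      (((∏ j, y j ^ I j) * Real.exp (-‖y‖ ^ 2 / 2) : ℝ) : ℂ) := by
    intro y
    rw [hq, hQ]
    push_cast
    rw [Finset.sum_mul]
    exact Finset.sum_congr rfl fun I _ => by ring
  have hqint : MeasureTheory.Integrable (fun y => (q y : ℂ)) := by
    simp_rw [hqe]
    exact MeasureTheory.integrable_finsetSum _ fun I _ =>
      ((aux_mono_integrable I).ofReal (𝕜 := ℂ)).const_mul _
  have hqcont : Continuous (fun y => (q y : ℂ)) := by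
    rw [hq, hQ]; fun_prop
  have hFq : ∀ ξ, Fn (fun y => (q y : ℂ)) ξ = ∑ I ∈ S, (a I : ℂ) * ((∏ j, (-Complex.I) ^ I j) *
      ((Real.sqrt (2 * Real.pi) ^ n * (auxG I ξ * Real.exp (-‖ξ‖ ^ 2 / 2)) : ℝ) : ℂ)) := by
    intro ξ
    unfold Fn
    simp_rw [hqe, Finset.mul_sum]
    rw [MeasureTheory.integral_finsetSum]
    · refine Finset.sum_congr rfl fun I _ => ?_
      rw [← aux_fourier_mono, ← MeasureTheory.integral_const_mul]
      congr 1; ext x; ring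
    · intro I _
      refine (((aux_mono_integrable I).ofReal (𝕜 := ℂ)).const_mul (a I : ℂ)).bdd_mul (c := 1)
        (f := fun x : EuclideanSpace ℝ (Fin n) => Complex.exp (-Complex.I * ((⟪x, ξ⟫ : ℝ) : ℂ)))
        (by fun_prop) (Filter.Eventually.of_forall fun x => ?_)
      rw [Complex.norm_exp]; simp
  have hFint : MeasureTheory.Integrable (Fn (fun y => (q y : ℂ))) := by
    rw [show Fn (fun y => (q y : ℂ)) = _ from funext hFq]
    exact MeasureTheory.integrable_finsetSum _ fun I _ =>
      ((((auxG_integrable I).const_mul _).ofReal (𝕜 := ℂ)).const_mul _).const_mul _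
  intro x
  set R := c / (2 * η) with hRdef
  have hexp : ∀ ξ : EuclideanSpace ℝ (Fin n),
      ‖Complex.exp (Complex.I * ((⟪x, ξ⟫ : ℝ) : ℂ))‖ = 1 := by
    intro ξ; rw [Complex.norm_exp]; simp
  have hint1 : MeasureTheory.Integrable (fun ξ : EuclideanSpace ℝ (Fin n) =>
      Fn (fun y => (q y : ℂ)) ξ * Complex.exp (Complex.I * ((⟪x, ξ⟫ : ℝ) : ℂ))) :=
    hFint.mul_bdd (c := 1) (by fun_prop) (Filter.Eventually.of_forall fun ξ => (hexp ξ).le)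
  have hχc : Continuous χ := hχ.continuous
  have hint2 : MeasureTheory.Integrable (fun ξ : EuclideanSpace ℝ (Fin n) =>
      (χ (η • ξ) : ℂ) * Fn (fun y => (q y : ℂ)) ξ *
        Complex.exp (Complex.I * ((⟪x, ξ⟫ : ℝ) : ℂ))) := by
    simp_rw [mul_assoc]
    refine hint1.bdd_mul (c := 1) (f := fun ξ => (χ (η • ξ) : ℂ))
      (by fun_prop) (Filter.Eventually.of_forall fun ξ => ?_)
    rw [Complex.norm_real, Real.norm_of_nonneg (hχ01 _).1]
    exact (hχ01 _).2
  have hinv := aux_inversion _ hqint hqcont hFint x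
  rw [hinv, hqcη]
  simp only
  rw [← mul_sub, ← MeasureTheory.integral_sub hint2 hint1, norm_mul]
  set s := {ξ : EuclideanSpace ℝ (Fin n) | R ≤ ‖ξ‖} with hs
  have hsm : MeasurableSet s := measurableSet_le measurable_const measurable_norm
  have hK : ‖(1 / (2 * (Real.pi : ℂ)) ^ n)‖ = ((2 * Real.pi) ^ n)⁻¹ := by
    rw [norm_div, norm_pow, norm_mul, Complex.norm_real, Real.norm_of_nonneg Real.pi_pos.le]
    simp
  rw [hK]
  have hGi : ∀ I : Fin n → ℕ, MeasureTheory.Integrable (fun ξ : EuclideanSpace ℝ (Fin n) =>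
      |auxG I ξ| * Real.exp (-‖ξ‖ ^ 2 / 2)) := by
    intro I
    refine (auxG_integrable I).abs.congr (Filter.Eventually.of_forall fun ξ => ?_)
    simp only [abs_mul, Real.abs_exp]
  have hbi : MeasureTheory.Integrable (fun ξ : EuclideanSpace ℝ (Fin n) =>
      ∑ I ∈ S, |a I| * Real.sqrt (2 * Real.pi) ^ n *
        (|auxG I ξ| * Real.exp (-‖ξ‖ ^ 2 / 2))) :=
    MeasureTheory.integrable_finsetSum _ fun I _ => (hGi I).const_mul _
  have hFb : ∀ ξ, ‖Fn (fun y => (q y : ℂ)) ξ‖ ≤ ∑ I ∈ S, |a I| * Real.sqrt (2 * Real.pi) ^ n *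
        (|auxG I ξ| * Real.exp (-‖ξ‖ ^ 2 / 2)) := by
    intro ξ
    rw [hFq]
    refine (norm_sum_le _ _).trans (Finset.sum_le_sum fun I _ => le_of_eq ?_)
    rw [norm_mul, norm_mul, norm_prod, Complex.norm_real, Complex.norm_real, Real.norm_eq_abs,
      Real.norm_eq_abs, abs_mul, abs_mul, Real.abs_exp, abs_of_nonneg (show 0 ≤ √(2 * Real.pi) ^ n by positivity)]
    simp only [norm_pow, norm_neg, Complex.norm_I, one_pow, Finset.prod_const_one]; ring
  have hmain : ‖∫ ξ : EuclideanSpace ℝ (Fin n), ((χ (η • ξ) : ℂ) * Fn (fun y => (q y : ℂ)) ξ *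
        Complex.exp (Complex.I * ((⟪x, ξ⟫ : ℝ) : ℂ)) -
      Fn (fun y => (q y : ℂ)) ξ * Complex.exp (Complex.I * ((⟪x, ξ⟫ : ℝ) : ℂ)))‖ ≤
      ∫ ξ in s, ∑ I ∈ S, |a I| * Real.sqrt (2 * Real.pi) ^ n *
        (|auxG I ξ| * Real.exp (-‖ξ‖ ^ 2 / 2)) := by
    rw [← MeasureTheory.integral_indicator hsm]
    refine MeasureTheory.norm_integral_le_of_norm_le (hbi.indicator hsm)
      (Filter.Eventually.of_forall fun ξ => ?_)
    rw [mul_assoc, ← sub_one_mul, norm_mul, norm_mul, hexp, mul_one]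
    by_cases hξ : ξ ∈ s
    · rw [Set.indicator_of_mem hξ]
      refine (mul_le_of_le_one_left (norm_nonneg _) ?_).trans (hFb ξ)
      rw [← Complex.ofReal_one, ← Complex.ofReal_sub, Complex.norm_real, Real.norm_eq_abs, abs_le]
      have := hχ01 (η • ξ)
      constructor <;> linarith [this.1, this.2]
    · rw [Set.indicator_of_notMem hξ]
      have hlt : ‖ξ‖ < R := not_le.1 hξ
      rw [hχ1]
      · simp
      · rw [mem_closedBall_zero_iff, norm_smul, Real.norm_of_nonneg hη.le]
        have : η * R = c / 2 := by rw [hRdef]; field_simp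
        rw [← this]; gcongr
  rw [MeasureTheory.integral_finsetSum _ fun I _ => ((hGi I).const_mul _).integrableOn] at hmain
  simp_rw [MeasureTheory.integral_const_mul] at hmain
  have h2pi : √(2 * Real.pi) ^ n * √(2 * Real.pi) ^ n = (2 * Real.pi) ^ n := by
    rw [← mul_pow, Real.mul_self_sqrt (by positivity)]
  have hpos : 0 < (2 * Real.pi) ^ n := by positivity
  rw [inv_mul_le_iff₀ hpos]
  refine hmain.trans ?_
  rw [Finset.mul_sum, Finset.mul_sum]
  refine Finset.sum_le_sum fun I _ => ?_
  refine (mul_le_mul_of_nonneg_left (aux_cs n hn R hcη I) (by positivity)).trans (le_of_eq ?_)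
  rw [← h2pi]; ring

end
end

section
/- With Q, q, q^c_η as above, for every k ∈ {1,…,n}, ‖∂q^c_η/∂x_k − ∂q/∂x_k‖_{L^∞(ℝⁿ)} ≤ √(⌊n/2+3⌋) · (c/(2η))^{n/2} · e^{−(1/4)(c/(2η))²} · Σ_I |a_I| √(I!). -/
open scoped RealInnerProductSpace

noncomputable section

open MeasureTheory Polynomial

/-- Hermite polynomial with real coefficients. -/
def hp (m : ℕ) : ℝ[X] := (hermite m).map (Int.castRingHom ℝ)

lemma hp_zero : hp 0 = 1 := by simp [hp]
lemma hp_succ (m : ℕ) : hp (m+1) = X * hp m - derivative (hp m) := by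
  simp [hp, hermite_succ, derivative_map]

lemma int_poly_gauss (p : ℝ[X]) : Integrable (fun x : ℝ => p.eval x * Real.exp (-x^2/2)) := by
  induction p using Polynomial.induction_on' with
  | add p q hp hq =>
    refine (hp.add hq).congr (Filter.Eventually.of_forall fun x => ?_)
    simp [add_mul]
  | monomial m a =>
    have h := (integrable_rpow_mul_exp_neg_mul_sq (b := 1/2) (by norm_num) (s := m)
      (by have : (0:ℝ) ≤ m := by positivity
          linarith)).const_mul a
    refine h.congr (Filter.Eventually.of_forall fun x => ?_)
    simp only [Real.rpow_natCast, eval_monomial]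
    rw [mul_assoc]
    ring_nf

lemma hasDerivAt_poly_gauss (p : ℝ[X]) (x : ℝ) :
    HasDerivAt (fun x : ℝ => p.eval x * Real.exp (-x^2/2))
      ((derivative p - X * p).eval x * Real.exp (-x^2/2)) x := by
  have h1 := p.hasDerivAt x
  have h2 : HasDerivAt (fun x : ℝ => Real.exp (-x^2/2)) (Real.exp (-x^2/2) * (-x)) x := by
    have : HasDerivAt (fun x : ℝ => -x^2/2) (-x) x := by
      have := ((hasDerivAt_pow 2 x).neg).div_const 2
      exact this.congr_deriv (by norm_num; ring)
    exact this.exp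
  exact (h1.mul h2).congr_deriv (by simp; ring)

lemma int_deriv_zero (p : ℝ[X]) :
    ∫ x : ℝ, (derivative p - X * p).eval x * Real.exp (-x^2/2) = 0 :=
  integral_eq_zero_of_hasDerivAt_of_integrable (hasDerivAt_poly_gauss p)
    (int_poly_gauss _) (int_poly_gauss _)

lemma int_hermite_mul (m : ℕ) (p : ℝ[X]) :
    ∫ x : ℝ, (hp m * p).eval x * Real.exp (-x^2/2)
      = ∫ x : ℝ, (derivative^[m] p).eval x * Real.exp (-x^2/2) := by
  induction m generalizing p with
  | zero => simp [hp_zero]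
  | succ m ih =>
    rw [Function.iterate_succ_apply, ← ih]
    have := int_deriv_zero (hp m * p)
    have e : ∀ x : ℝ, (hp m * derivative p).eval x * Real.exp (-x^2/2)
        = (hp (m+1) * p).eval x * Real.exp (-x^2/2) +
          (derivative (hp m * p) - X * (hp m * p)).eval x * Real.exp (-x^2/2) := by
      intro x
      rw [hp_succ]
      simp [derivative_mul]
      ring
    simp_rw [e]
    rw [integral_add (int_poly_gauss _) (int_poly_gauss _), this, add_zero]

lemma int_gauss : ∫ x : ℝ, Real.exp (-x^2/2) = √(2 * Real.pi) := by
  have := integral_gaussian (1/2)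
  rw [show (2 * Real.pi) = Real.pi / (1/2) by ring, ← this]
  congr 1; ext x; ring_nf

lemma int_hermite_sq (m : ℕ) :
    ∫ x : ℝ, (hp m * hp m).eval x * Real.exp (-x^2/2) = m.factorial * √(2 * Real.pi) := by
  rw [int_hermite_mul]
  have : derivative^[m] (hp m) = C (m.factorial : ℝ) := by
    have hd : (hp m).natDegree ≤ m := by
      unfold hp; exact (natDegree_map_le).trans natDegree_hermite.le
    have h0 : (derivative^[m] (hp m)).natDegree ≤ 0 := by
      refine (natDegree_iterate_derivative _ _).trans ?_
      omega
    rw [eq_C_of_natDegree_le_zero h0, coeff_iterate_derivative]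
    simp [hp, Nat.descFactorial_self]
  rw [this]
  simp only [eval_C]
  rw [integral_const_mul, int_gauss]

lemma fourier_base (t : ℝ) : ∫ x : ℝ, Complex.exp (-Complex.I * (x * t : ℝ)) *
    ((Real.exp (-x^2/2) : ℝ) : ℂ) = √(2*Real.pi) * Real.exp (-t^2/2) := by
  have h := fourierIntegral_gaussian (b := 1/2) (by norm_num) (-t)
  have e2 : ((Real.pi / (1/2) : ℂ))^(1/2 : ℂ) = (√(2*Real.pi) : ℝ) := by
    rw [Real.sqrt_eq_rpow, Complex.ofReal_cpow (by positivity)]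
    push_cast
    congr 1; ring
  rw [e2] at h
  convert h using 1
  · congr 1; ext x
    push_cast
    congr 2 <;> ring
  · push_cast
    congr 2; ring

lemma fourier_hermite (m : ℕ) (t : ℝ) : ∫ x : ℝ, Complex.exp (-Complex.I * (x * t : ℝ)) *
    ((x ^ m * Real.exp (-x^2/2) : ℝ) : ℂ) =
      √(2*Real.pi) * ((-Complex.I)^m * ((hp m).eval t * Real.exp (-t^2/2) : ℝ)) := by
  induction m generalizing t with
  | zero => simpa [hp_zero] using fourier_base t
  | succ m ih =>
    have hpg : ∀ m : ℕ, Integrable (fun x : ℝ => ((x ^ m * Real.exp (-x^2/2) : ℝ) : ℂ)) := by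
      intro m
      have := (int_poly_gauss (X^m)).ofReal (𝕜 := ℂ)
      simpa using this
    have hn : ∀ x t : ℝ, ‖Complex.exp (-Complex.I * (x * t : ℝ))‖ = 1 := by
      intro x t
      rw [Complex.norm_exp]; simp
    have hmeas : ∀ (m : ℕ) (t : ℝ), AEStronglyMeasurable (fun x : ℝ => Complex.exp (-Complex.I * (x * t : ℝ)) *
    ((x ^ m * Real.exp (-x^2/2) : ℝ) : ℂ)) volume := by
      intro m t
      apply Continuous.aestronglyMeasurable
      fun_prop
    have hd := (hasDerivAt_integral_of_dominated_loc_of_deriv_le (μ := volume) (𝕜 := ℝ)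
      (F := fun (t x : ℝ) => Complex.exp (-Complex.I * (x * t : ℝ)) *
        ((x ^ m * Real.exp (-x^2/2) : ℝ) : ℂ))
      (F' := fun (t x : ℝ) => -Complex.I * (Complex.exp (-Complex.I * (x * t : ℝ)) *
        ((x ^ (m+1) * Real.exp (-x^2/2) : ℝ) : ℂ)))
      (bound := fun x => ‖((x ^ (m+1) * Real.exp (-x^2/2) : ℝ) : ℂ)‖)
      (x₀ := t) (s := Set.univ) Filter.univ_mem
      (Filter.Eventually.of_forall fun t => hmeas m t)
      (by
        refine (hpg m).norm.mono' (hmeas m t) (Filter.Eventually.of_forall fun x => ?_)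
        rw [norm_mul, hn, one_mul])
      ((hmeas (m+1) t).const_mul _)
      (Filter.Eventually.of_forall fun x t _ => by
        rw [norm_mul, norm_mul, hn, one_mul]; simp)
      (hpg _).norm
      (Filter.Eventually.of_forall fun x t _ => by
        have h1 : HasDerivAt (fun t : ℝ => -Complex.I * ((x * t : ℝ) : ℂ)) (-Complex.I * x) t := by
          have := ((((hasDerivAt_id t).const_mul x)).ofReal_comp).const_mul (-Complex.I)
          simpa using this
        exact ((h1.cexp).mul_const ((x ^ m * Real.exp (-x^2/2) : ℝ) : ℂ)).congr_deriv
          (by push_cast; ring))).2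
    simp_rw [ih] at hd
    have hd2 := (((hasDerivAt_poly_gauss (hp m) t).ofReal_comp).const_mul
      ((-Complex.I)^m)).const_mul (√(2*Real.pi) : ℂ)
    have := hd.unique hd2
    rw [integral_const_mul] at this
    have h3 : ∀ z w : ℂ, -Complex.I * z = w → z = Complex.I * w := by
      rintro z w rfl
      linear_combination z * Complex.I_mul_I
    rw [h3 _ _ this, hp_succ]
    push_cast
    simp
    ring

open Set Filter Topology

def Jt (R : ℝ) (m : ℕ) : ℝ := ∫ r in Ioi R, r ^ m * Real.exp (-r^2/2)

lemma int_Ioi_poly (R : ℝ) (p : ℝ[X]) :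
    ∫ x in Ioi R, (derivative p - X * p).eval x * Real.exp (-x^2/2)
      = - (p.eval R * Real.exp (-R^2/2)) := by
  have := integral_Ioi_of_hasDerivAt_of_tendsto' (a := R) (m := 0)
    (fun x _ => hasDerivAt_poly_gauss p x) (int_poly_gauss _).integrableOn
    (tendsto_zero_of_hasDerivAt_of_integrableOn_Ioi (a := R)
      (fun x _ => hasDerivAt_poly_gauss p x) (int_poly_gauss _).integrableOn
      (int_poly_gauss _).integrableOn)
  rw [this]; ring

lemma int_pow_gauss (m : ℕ) : Integrable (fun x : ℝ => x^m * Real.exp (-x^2/2)) := by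
  simpa using int_poly_gauss (X^m)

lemma Jt_one (R : ℝ) : Jt R 1 = Real.exp (-R^2/2) := by
  have := int_Ioi_poly R 1
  simp [integral_neg] at this
  simpa [Jt] using this

lemma Jt_rec (R : ℝ) (m : ℕ) :
    Jt R (m+2) = R^(m+1) * Real.exp (-R^2/2) + (m+1) * Jt R m := by
  have := int_Ioi_poly R (X^(m+1))
  have e : ∀ x : ℝ, (derivative (X^(m+1) : ℝ[X]) - X * X^(m+1)).eval x * Real.exp (-x^2/2)
    = (m+1) * (x^m * Real.exp (-x^2/2)) - x^(m+2) * Real.exp (-x^2/2) := by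
    intro x
    simp
    ring
  simp_rw [e] at this
  rw [integral_sub ((int_pow_gauss m).const_mul _).integrableOn (int_pow_gauss _).integrableOn,
    integral_const_mul] at this
  simp only [eval_pow, eval_X] at this
  unfold Jt
  linarith

def Cn (n : ℕ) : ℝ := 1 / (√2 ^ n * Real.Gamma (n / 2 + 1))

lemma Cn_rec (n : ℕ) : Cn (n+2) * (n+2) = Cn n := by
  unfold Cn
  have h : Real.Gamma (((n+2 : ℕ) : ℝ)/2 + 1) = (n/2+1) * Real.Gamma (n/2+1) := by
    rw [← Real.Gamma_add_one (by positivity)]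
    congr 1; push_cast; ring
  have hG : 0 < Real.Gamma ((n:ℝ)/2+1) := Real.Gamma_pos_of_pos (by positivity)
  have h2 : √2 ^ (n+2) = 2 * √2^n := by
    rw [pow_add, Real.sq_sqrt (by norm_num)]; ring
  rw [h, h2]
  field_simp

lemma Cn_pos (n : ℕ) : 0 < Cn n := by
  have hG : 0 < Real.Gamma ((n:ℝ)/2+1) := Real.Gamma_pos_of_pos (by positivity)
  unfold Cn; positivity

lemma Cn_le (n : ℕ) : Cn n ≤ 1 := by
  induction n using Nat.twoStepInduction with
  | zero => simp [Cn]
  | one =>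
    unfold Cn
    have h : Real.Gamma (((1:ℕ) : ℝ)/2 + 1) = 1/2 * √Real.pi := by
      rw [← Real.Gamma_one_half_eq, ← Real.Gamma_add_one (by norm_num)]; norm_num
    rw [h, pow_one, div_le_one (by positivity)]
    have h1 : √2 * (1/2 * √Real.pi) = 1/2 * √(2*Real.pi) := by
      rw [Real.sqrt_mul (by norm_num)]; ring
    have h2 : (2:ℝ) ≤ √(2*Real.pi) := by
      apply Real.le_sqrt_of_sq_le
      have := Real.pi_gt_three
      nlinarith
    rw [h1]; linarith
  | more n ih _ =>
    have h := Cn_rec n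
    have hp := Cn_pos (n+2)
    nlinarith [(Nat.cast_nonneg n : (0:ℝ) ≤ n)]

lemma Jt_zero_le {R : ℝ} (hR : 1 ≤ R) : Jt R 0 ≤ Real.exp (-R^2/2) := by
  rw [← Jt_one R]
  unfold Jt
  refine setIntegral_mono_on (int_pow_gauss 0).integrableOn (int_pow_gauss 1).integrableOn
    measurableSet_Ioi fun x hx => ?_
  have : 1 ≤ x := hR.trans (le_of_lt hx)
  have := Real.exp_pos (-x^2/2)
  simp only [pow_zero, pow_one]
  nlinarith

lemma tail_one_dim {R : ℝ} (hR : 1 ≤ R) (n : ℕ) :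
    Cn n * Jt R (n+1) ≤ ((n/2 + 2 : ℕ) : ℝ) * R^n * Real.exp (-R^2/2) := by
  have he := Real.exp_pos (-R^2/2)
  induction n using Nat.twoStepInduction with
  | zero => 
    simp [Cn, Jt_one]; linarith
  | one =>
    rw [Jt_rec R 0]
    have h0 := Jt_zero_le hR
    have h1 := Cn_le 1
    have h2 := Cn_pos 1
    have h3 : (R ^ (0+1) * Real.exp (-R^2/2) + ((0:ℕ)+1) * Jt R 0) ≤ 2 * R * Real.exp (-R^2/2) := by
      simp; nlinarith
    calc _ ≤ Cn 1 * (2 * R * Real.exp (-R^2/2)) := by gcongr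
      _ ≤ 1 * (2 * R * Real.exp (-R^2/2)) := by gcongr
      _ = _ := by norm_num
  | more n ih _ =>
    have h := Cn_rec n
    have hr := Jt_rec R (n+1)
    have hn : ((n+2)/2 + 2 : ℕ) = (n/2+2) + 1 := by omega
    rw [hn]
    have e1 : Cn (n+2) * Jt R (n+2+1) = Cn (n+2) * (R^(n+2) * Real.exp (-R^2/2)) + Cn n * Jt R (n+1) := by
      rw [show n+2+1 = n+1+2 by ring, hr, ← h]; push_cast; ring
    rw [e1]
    have h1 := Cn_le (n+2)
    have h2 : R^n ≤ R^(n+2) := pow_le_pow_right₀ hR (by omega)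
    calc _ ≤ 1 * (R^(n+2) * Real.exp (-R^2/2)) + ((n/2 + 2 : ℕ) : ℝ) * R^n * Real.exp (-R^2/2) := by
            gcongr
      _ ≤ 1 * (R^(n+2) * Real.exp (-R^2/2)) + ((n/2 + 2 : ℕ) : ℝ) * R^(n+2) * Real.exp (-R^2/2) := by
            gcongr
      _ = _ := by push_cast; ring

section ndim
variable {n : ℕ}

lemma gauss_prod (x : EuclideanSpace ℝ (Fin n)) :
    Real.exp (-‖x‖^2/2) = ∏ j, Real.exp (-(x j)^2/2) := by
  rw [← Real.exp_sum, EuclideanSpace.real_norm_sq_eq, ← Finset.sum_div, Finset.sum_neg_distrib]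

lemma int_prod (p : Fin n → ℝ[X]) : Integrable (fun x : EuclideanSpace ℝ (Fin n) =>
    (∏ j, (p j).eval (x j)) * Real.exp (-‖x‖^2/2)) := by
  have h := Integrable.fintype_prod (μ := fun _ : Fin n => (volume : Measure ℝ)) 
    (f := fun j (t : ℝ) => (p j).eval t * Real.exp (-t^2/2))
    (fun j => int_poly_gauss (p j))
  have := (PiLp.volume_preserving_ofLp (Fin n)).integrable_comp_of_integrable h
  refine this.congr (Eventually.of_forall fun x => ?_)
  simp only [Function.comp, gauss_prod, Finset.prod_mul_distrib]

lemma integral_prod_gen (f : Fin n → ℝ → ℂ) : ∫ x : EuclideanSpace ℝ (Fin n), ∏ j, f j (x j)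
    = ∏ j, ∫ t, f j t := by
  rw [← integral_fintype_prod_volume_eq_prod]
  rw [← (PiLp.volume_preserving_ofLp (Fin n)).integral_comp
    (MeasurableEquiv.toLp 2 _).symm.measurableEmbedding]

lemma integral_prod_real (f : Fin n → ℝ → ℝ) : ∫ x : EuclideanSpace ℝ (Fin n), ∏ j, f j (x j)
    = ∏ j, ∫ t, f j t := by
  rw [← integral_fintype_prod_volume_eq_prod]
  rw [← (PiLp.volume_preserving_ofLp (Fin n)).integral_comp
    (MeasurableEquiv.toLp 2 _).symm.measurableEmbedding]

lemma int_coord (p : Fin n → ℝ[X]) (k : Fin n) (s : ℕ) :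
    Integrable (fun x : EuclideanSpace ℝ (Fin n) =>
      x k ^ s * ((∏ j, (p j).eval (x j)) * Real.exp (-‖x‖^2/2))) := by
  refine (int_prod (fun j => (if j = k then X^s else 1) * p j)).congr
    (Eventually.of_forall fun x => ?_)
  have : ∏ j, (if j = k then X^s else (1 : ℝ[X])).eval (x j) = x k ^ s := by
    rw [Finset.prod_eq_single k]
    · simp
    · intro b _ hb; simp [hb]
    · simp
  simp only [eval_mul, Finset.prod_mul_distrib, this, mul_assoc]

def Tk (R : ℝ) (k : Fin n) : ℝ :=
  ∫ x in {x : EuclideanSpace ℝ (Fin n) | R < ‖x‖}, x k ^ 2 * Real.exp (-‖x‖^2/2)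

lemma meas_out (R : ℝ) : MeasurableSet {x : EuclideanSpace ℝ (Fin n) | R < ‖x‖} :=
  measurableSet_lt measurable_const measurable_norm

lemma Tk_symm (R : ℝ) (k l : Fin n) : Tk R k = Tk R l := by
  unfold Tk
  rw [← integral_indicator (meas_out R), ← integral_indicator (meas_out R)]
  let L := LinearIsometryEquiv.piLpCongrLeft 2 ℝ ℝ (Equiv.swap k l)
  rw [← L.measurePreserving.integral_comp L.toHomeomorph.measurableEmbedding]
  congr 1
  ext x
  have h1 : (L x) k = x l := by
    simp [L, LinearIsometryEquiv.piLpCongrLeft_apply, Equiv.piCongrLeft']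
  simp [indicator, h1]

lemma Tk_int (R : ℝ) (k : Fin n) : IntegrableOn
    (fun x : EuclideanSpace ℝ (Fin n) => x k ^ 2 * Real.exp (-‖x‖^2/2)) {x | R < ‖x‖} := by
  have := int_coord (fun _ : Fin n => 1) k 2
  simp at this
  exact this.integrableOn

lemma Tk_eq {R : ℝ} (hR : 1 ≤ R) (k : Fin n) :
    Tk R k = √(2*Real.pi)^n * (Cn n * Jt R (n+1)) := by
  have hn : 0 < n := k.pos
  have : Nonempty (Fin n) := ⟨k⟩
  have hs : ∑ l : Fin n, Tk R l = n * Tk R k := by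
    rw [Finset.sum_congr rfl (fun l _ => Tk_symm R l k)]; simp
  have hs2 : ∑ l : Fin n, Tk R l = ∫ x : EuclideanSpace ℝ (Fin n),
      (Ioi R).indicator (fun r => r^2 * Real.exp (-r^2/2)) ‖x‖ := by
    unfold Tk
    rw [← integral_finsetSum _ (fun l _ => Tk_int R l), ← integral_indicator (meas_out R)]
    congr 1
    ext x
    simp [indicator, ← Finset.sum_mul, EuclideanSpace.real_norm_sq_eq]
  have hv : (volume : Measure (EuclideanSpace ℝ (Fin n))).real (Metric.ball 0 1)
      = √(2*Real.pi)^n * Cn n := by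
    rw [measureReal_def, EuclideanSpace.volume_ball]
    have hG : 0 < Real.Gamma ((n:ℝ)/2+1) := Real.Gamma_pos_of_pos (by positivity)
    simp
    rw [ENNReal.toReal_ofReal (by positivity)]
    unfold Cn
    rw [mul_pow]
    field_simp
  have hj : ∫ y in Ioi (0:ℝ), y ^ (n-1) • (Ioi R).indicator (fun r => r^2 * Real.exp (-r^2/2)) y
      = Jt R (n+1) := by
    unfold Jt
    have : (fun y : ℝ => y ^ (n-1) • (Ioi R).indicator (fun r => r^2 * Real.exp (-r^2/2)) y)
      = (Ioi R).indicator (fun r => r^(n+1) * Real.exp (-r^2/2)) := by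
      ext y
      by_cases hy : R < y
      · simp [indicator, hy]
        rw [← mul_assoc, ← pow_add]
        congr 2; omega
      · simp [indicator, hy]
    rw [this, setIntegral_indicator measurableSet_Ioi, Ioi_inter_Ioi, sup_of_le_right (by linarith)]
  rw [integral_fun_norm_addHaar, finrank_euclideanSpace_fin, hv, hj, hs] at hs2
  have hn' : (n:ℝ) ≠ 0 := by positivity
  simp only [nsmul_eq_mul, smul_eq_mul] at hs2
  rw [← mul_assoc]
  exact mul_left_cancel₀ hn' hs2

lemma herm_sq (I : Fin n → ℕ) : ∫ x : EuclideanSpace ℝ (Fin n),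
    (∏ j, (hp (I j)).eval (x j))^2 * Real.exp (-‖x‖^2/2)
      = √(2*Real.pi)^n * ∏ j, ((I j).factorial : ℝ) := by
  have := integral_prod_real (fun j t => (hp (I j) * hp (I j)).eval t * Real.exp (-t^2/2))
  simp_rw [int_hermite_sq, Finset.prod_mul_distrib] at this
  simp only [Finset.prod_const, Finset.card_univ, Fintype.card_fin] at this
  rw [mul_comm (√(2*Real.pi)^n), ← this]
  congr 1; ext x
  rw [gauss_prod]
  simp only [eval_mul, Finset.prod_mul_distrib]
  ring

lemma herm_tail {R : ℝ} (hR : 1 ≤ R) (I : Fin n → ℕ) (k : Fin n) :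
    ∫ x in {x : EuclideanSpace ℝ (Fin n) | R < ‖x‖},
      |x k| * (|∏ j, (hp (I j)).eval (x j)| * Real.exp (-‖x‖^2/2)) ≤
    √(2*Real.pi)^n * (√((n/2 + 3 : ℕ) : ℝ) * R ^ ((n:ℝ)/2) * Real.exp (-(1/4) * R^2) *
      √(∏ j, ((I j).factorial : ℝ))) := by
  have hee : ∀ x : EuclideanSpace ℝ (Fin n), Real.exp (-‖x‖^2/4) ^ 2 = Real.exp (-‖x‖^2/2) := by
    intro x; rw [← Real.exp_nat_mul]; congr 1; push_cast; ring
  have hI : Integrable (fun x : EuclideanSpace ℝ (Fin n) =>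
      (∏ j, (hp (I j)).eval (x j))^2 * Real.exp (-‖x‖^2/2)) := by
    have := int_prod (fun j => hp (I j) ^ 2)
    simpa [Finset.prod_pow] using this
  have m1 : MemLp (fun x : EuclideanSpace ℝ (Fin n) => |x k| * Real.exp (-‖x‖^2/4)) 
      (ENNReal.ofReal 2) (volume.restrict {x | R < ‖x‖}) := by
    rw [show ENNReal.ofReal 2 = 2 by norm_num, memLp_two_iff_integrable_sq
      (Continuous.aestronglyMeasurable (by fun_prop))]
    refine (Tk_int R k).congr (Eventually.of_forall fun x => ?_)
    simp [mul_pow, hee]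
  have m2 : MemLp (fun x : EuclideanSpace ℝ (Fin n) =>
      |∏ j, (hp (I j)).eval (x j)| * Real.exp (-‖x‖^2/4)) 
      (ENNReal.ofReal 2) (volume.restrict {x | R < ‖x‖}) := by
    rw [show ENNReal.ofReal 2 = 2 by norm_num, memLp_two_iff_integrable_sq
      (Continuous.aestronglyMeasurable (by fun_prop))]
    refine hI.integrableOn.congr (Eventually.of_forall fun x => ?_)
    simp [mul_pow, hee]
  have cs := integral_mul_le_Lp_mul_Lq_of_nonneg Real.HolderConjugate.two_two
    (Eventually.of_forall fun x => by positivity) (Eventually.of_forall fun x => by positivity) m1 m2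
  have e1 : ∀ x : EuclideanSpace ℝ (Fin n), (|x k| * Real.exp (-‖x‖^2/4)) ^ (2:ℝ)
      = x k ^ 2 * Real.exp (-‖x‖^2/2) := by
    intro x; rw [Real.rpow_two, mul_pow, hee, sq_abs]
  have e2 : ∀ x : EuclideanSpace ℝ (Fin n),
      (|∏ j, (hp (I j)).eval (x j)| * Real.exp (-‖x‖^2/4)) ^ (2:ℝ)
      = (∏ j, (hp (I j)).eval (x j)) ^ 2 * Real.exp (-‖x‖^2/2) := by
    intro x; rw [Real.rpow_two, mul_pow, hee, sq_abs]
  have e3 : ∀ x : EuclideanSpace ℝ (Fin n), |x k| * (|∏ j, (hp (I j)).eval (x j)| * Real.exp (-‖x‖^2/2))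
      = (|x k| * Real.exp (-‖x‖^2/4)) * (|∏ j, (hp (I j)).eval (x j)| * Real.exp (-‖x‖^2/4)) := by
    intro x; rw [← hee]; ring
  simp_rw [e1, e2] at cs
  simp_rw [e3]
  refine cs.trans ?_
  rw [← Real.sqrt_eq_rpow, ← Real.sqrt_eq_rpow]
  have b1 : ∫ x in {x : EuclideanSpace ℝ (Fin n) | R < ‖x‖}, x k ^ 2 * Real.exp (-‖x‖^2/2)
      ≤ √(2*Real.pi)^n * (((n/2 + 3 : ℕ) : ℝ) * R^n * Real.exp (-R^2/2)) := by
    have := Tk_eq hR k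
    unfold Tk at this
    rw [this]
    have h4 := tail_one_dim hR n
    refine mul_le_mul_of_nonneg_left (h4.trans ?_) (by positivity)
    gcongr
    omega
  have b2 : ∫ x in {x : EuclideanSpace ℝ (Fin n) | R < ‖x‖},
      (∏ j, (hp (I j)).eval (x j))^2 * Real.exp (-‖x‖^2/2)
      ≤ √(2*Real.pi)^n * ∏ j, ((I j).factorial : ℝ) := by
    rw [← herm_sq]
    exact setIntegral_le_integral hI (Eventually.of_forall fun x => by positivity)
  refine (mul_le_mul (Real.sqrt_le_sqrt b1) (Real.sqrt_le_sqrt b2) (by positivity) (by positivity)).trans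
    (le_of_eq ?_)
  have hR0 : 0 ≤ R := by linarith
  have r1 : √(R^n) = R ^ ((n:ℝ)/2) := by
    rw [Real.sqrt_eq_rpow, ← Real.rpow_natCast, ← Real.rpow_mul hR0]; congr 1; ring
  have r2 : √(Real.exp (-R^2/2)) = Real.exp (-(1/4) * R^2) := by
    rw [← Real.exp_half]; congr 1; ring
  have hs : √(√(2*Real.pi)^n) * √(√(2*Real.pi)^n) = √(2*Real.pi)^n := Real.mul_self_sqrt (by positivity)
  have hw : 0 ≤ √(2*Real.pi) := Real.sqrt_nonneg _
  generalize √(2*Real.pi) = w at hs hw ⊢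
  rw [Real.sqrt_mul (by positivity), Real.sqrt_mul (by positivity), Real.sqrt_mul (by positivity),
    Real.sqrt_mul (by positivity), r1, r2]
  linear_combination (√((n/2 + 3 : ℕ) : ℝ) * R ^ ((n:ℝ)/2) * Real.exp (-(1/4) * R^2) *
      √(∏ j, ((I j).factorial : ℝ))) * hs

end ndim

section fourierside
variable {n : ℕ}

lemma norm_cexp_I (r : ℝ) : ‖Complex.exp (Complex.I * r)‖ = 1 := by
  rw [Complex.norm_exp]; simp

lemma fderiv_osc (h : EuclideanSpace ℝ (Fin n) → ℂ) (hi : Integrable h) (hi' : Integrable (fun ξ => ‖ξ‖ * ‖h ξ‖)) (x : EuclideanSpace ℝ (Fin n)) :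
    DifferentiableAt ℝ (fun x : EuclideanSpace ℝ (Fin n) => ∫ ξ, h ξ * Complex.exp (Complex.I * (⟪x, ξ⟫ : ℝ))) x ∧
    ∀ v : EuclideanSpace ℝ (Fin n), fderiv ℝ (fun x : EuclideanSpace ℝ (Fin n) => ∫ ξ, h ξ * Complex.exp (Complex.I * (⟪x, ξ⟫ : ℝ))) x v
      = ∫ ξ, h ξ * Complex.exp (Complex.I * (⟪x, ξ⟫ : ℝ)) * Complex.I * (⟪ξ, v⟫ : ℝ) := by
  let F' : EuclideanSpace ℝ (Fin n) → EuclideanSpace ℝ (Fin n) → (EuclideanSpace ℝ (Fin n) →L[ℝ] ℂ) := fun x ξ =>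
    (h ξ * (Complex.exp (Complex.I * (⟪x, ξ⟫ : ℝ)) * Complex.I)) • (Complex.ofRealCLM ∘L (innerSL ℝ ξ))
  have hm : ∀ x : EuclideanSpace ℝ (Fin n), AEStronglyMeasurable
      (fun ξ : EuclideanSpace ℝ (Fin n) => h ξ * Complex.exp (Complex.I * (⟪x, ξ⟫ : ℝ))) volume := fun x =>
    hi.aestronglyMeasurable.mul (Continuous.aestronglyMeasurable (by fun_prop))
  have hm' : AEStronglyMeasurable (F' x) volume := by
    refine AEStronglyMeasurable.smul (hi.aestronglyMeasurable.mul
      (Continuous.aestronglyMeasurable (by fun_prop))) (Continuous.aestronglyMeasurable ?_)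
    exact (ContinuousLinearMap.continuous (ContinuousLinearMap.compL ℝ (EuclideanSpace ℝ (Fin n)) ℝ ℂ Complex.ofRealCLM)).comp
      (innerSL ℝ).continuous
  have hb : ∀ (x ξ : EuclideanSpace ℝ (Fin n)), ‖F' x ξ‖ ≤ ‖ξ‖ * ‖h ξ‖ := by
    intro x ξ
    refine ContinuousLinearMap.opNorm_le_bound _ (by positivity) fun v => ?_
    simp only [F', smul_apply, ContinuousLinearMap.comp_apply, smul_eq_mul,
      norm_mul, norm_cexp_I, Complex.norm_I, mul_one, Complex.ofRealCLM_apply, Complex.norm_real,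
      innerSL_apply_apply]
    have := norm_inner_le_norm (𝕜 := ℝ) ξ v
    calc _ ≤ ‖h ξ‖ * (‖ξ‖ * ‖v‖) := by gcongr
      _ = _ := by ring
  have key := hasFDerivAt_integral_of_dominated_of_fderiv_le (𝕜 := ℝ) (μ := (volume : Measure (EuclideanSpace ℝ (Fin n))))
    (F := fun x ξ => h ξ * Complex.exp (Complex.I * (⟪x, ξ⟫ : ℝ))) (F' := F')
    (bound := fun ξ => ‖ξ‖ * ‖h ξ‖) (x₀ := x) (s := univ) univ_mem
    (Eventually.of_forall hm)
    (hi.norm.mono' (hm x) (Eventually.of_forall fun ξ => by rw [norm_mul, norm_cexp_I, mul_one]))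
    hm' (Eventually.of_forall fun ξ x _ => hb x ξ) hi'
    (Eventually.of_forall fun ξ x _ => by
      have h1 : HasFDerivAt (fun x : EuclideanSpace ℝ (Fin n) => ((⟪x, ξ⟫ : ℝ) : ℂ)) (Complex.ofRealCLM ∘L (innerSL ℝ ξ)) x := by
        have := (Complex.ofRealCLM ∘L (innerSL ℝ ξ)).hasFDerivAt (x := x)
        refine this.congr_of_eventuallyEq (Eventually.of_forall fun y => ?_)
        simp [real_inner_comm]
      have h2 := ((h1.const_mul Complex.I).cexp).const_mul (h ξ)
      refine h2.congr_fderiv ?_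
      ext v
      simp [F']
      ring)
  refine ⟨key.differentiableAt, fun v => ?_⟩
  rw [key.fderiv, ContinuousLinearMap.integral_apply]
  · congr 1; ext ξ
    simp only [F', smul_apply, ContinuousLinearMap.comp_apply, smul_eq_mul,
      Complex.ofRealCLM_apply, innerSL_apply_apply]
    ring
  · exact hi'.mono' hm' (Eventually.of_forall fun ξ => hb x ξ)

lemma Fn_eq_fourier (f : EuclideanSpace ℝ (Fin n) → ℂ) (w : EuclideanSpace ℝ (Fin n)) :
    FourierTransform.fourier f w = Fn f ((2 * Real.pi) • w) := by
  rw [Real.fourier_eq']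
  unfold Fn
  congr 1; ext v
  rw [inner_smul_right, smul_eq_mul]
  congr 2
  push_cast
  ring

lemma Fn_inversion (f : EuclideanSpace ℝ (Fin n) → ℂ) (hf : Integrable f) (hc : Continuous f) (hF : Integrable (Fn f))
    (x : EuclideanSpace ℝ (Fin n)) : (1 / (2 * Real.pi) ^ n : ℂ) *
      ∫ ξ, Fn f ξ * Complex.exp (Complex.I * (⟪x, ξ⟫ : ℝ)) = f x := by
  have hpi : (2 * Real.pi) ≠ 0 := by positivity
  have e : FourierTransform.fourier f = fun w => Fn f ((2 * Real.pi) • w) := by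
    ext w; exact Fn_eq_fourier f w
  have hF' : Integrable (FourierTransform.fourier f) := by
    rw [e]
    exact (integrable_comp_smul_iff volume (Fn f) hpi).2 hF
  have := congrFun (hc.fourierInv_fourier_eq hf hF') x
  rw [← this, Real.fourierInv_eq', e]
  have h2 := Measure.integral_comp_smul (volume : Measure (EuclideanSpace ℝ (Fin n)))
    (fun ξ => Fn f ξ * Complex.exp (Complex.I * (⟪x, ξ⟫ : ℝ))) (2 * Real.pi)
  rw [finrank_euclideanSpace_fin, abs_of_pos (by positivity)] at h2
  have h3 : (1 / (2 * Real.pi) ^ n : ℂ) = ((((2 * Real.pi) ^ n)⁻¹ : ℝ) : ℂ) := by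
    push_cast; simp
  rw [h3, ← Complex.real_smul, ← h2]
  congr 1; ext v
  rw [smul_eq_mul, mul_comm, inner_smul_right, real_inner_comm]
  congr 2
  push_cast
  ring

/-- The Hermite function (unnormalised). -/
def Gh (I : Fin n → ℕ) (ξ : EuclideanSpace ℝ (Fin n)) : ℝ := (∏ j, (hp (I j)).eval (ξ j)) * Real.exp (-‖ξ‖^2/2)

lemma Fn_mono (I : Fin n → ℕ) (ξ : EuclideanSpace ℝ (Fin n)) :
    Fn (fun y : EuclideanSpace ℝ (Fin n) => (((∏ j, y j ^ I j) * Real.exp (-‖y‖^2/2) : ℝ) : ℂ)) ξ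
      = √(2*Real.pi)^n * ((∏ j, (-Complex.I)^(I j)) * (Gh I ξ : ℝ)) := by
  have h := integral_prod_gen (fun j (t : ℝ) => Complex.exp (-Complex.I * (t * ξ j : ℝ)) *
    ((t ^ I j * Real.exp (-t^2/2) : ℝ) : ℂ))
  simp_rw [fourier_hermite] at h
  unfold Fn Gh
  rw [gauss_prod ξ]
  rw [← Finset.prod_mul_distrib]
  simp_rw [Finset.prod_mul_distrib] at h
  rw [Finset.prod_const, Finset.card_univ, Fintype.card_fin] at h
  push_cast [Finset.prod_mul_distrib] at h ⊢
  rw [← h]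
  congr 1; ext x
  have gx := congrArg (fun r : ℝ => (r : ℂ)) (gauss_prod x)
  push_cast at gx
  rw [gx]
  congr 1
  rw [← Complex.exp_sum, ← Finset.mul_sum]
  congr 1
  congr 1
  simp [PiLp.inner_apply, mul_comm]

lemma int_mono (I : Fin n → ℕ) :
    Integrable (fun y : EuclideanSpace ℝ (Fin n) => (∏ j, y j ^ I j) * Real.exp (-‖y‖^2/2)) := by
  simpa using int_prod (fun j => (X : ℝ[X])^(I j))

lemma cont_Gh (I : Fin n → ℕ) : Continuous (Gh I : EuclideanSpace ℝ (Fin n) → ℝ) := by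
  unfold Gh; fun_prop

lemma int_Gh (I : Fin n → ℕ) : Integrable (Gh I : EuclideanSpace ℝ (Fin n) → ℝ) := int_prod _

lemma int_coord_Gh (I : Fin n → ℕ) (k : Fin n) :
    Integrable (fun ξ : EuclideanSpace ℝ (Fin n) => |ξ k| * |Gh I ξ|) := by
  have := (int_coord (fun j => hp (I j)) k 1).abs
  refine this.congr (Eventually.of_forall fun x => ?_)
  simp only [pow_one, abs_mul, Gh]

lemma int_norm_Gh (I : Fin n → ℕ) :
    Integrable (fun ξ : EuclideanSpace ℝ (Fin n) => ‖ξ‖ * |Gh I ξ|) := by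
  have := integrable_finsetSum Finset.univ (fun k _ => int_coord_Gh I k)
  refine this.mono' (Continuous.aestronglyMeasurable ?_) (Eventually.of_forall fun x => ?_)
  · have := cont_Gh I
    fun_prop
  · rw [← Finset.sum_mul, norm_mul, norm_norm, Real.norm_eq_abs, abs_abs]
    gcongr
    rw [EuclideanSpace.norm_eq]
    refine Real.sqrt_le_iff.2 ⟨by positivity, ?_⟩
    simp only [Real.norm_eq_abs]
    exact Finset.sum_sq_le_sq_sum_of_nonneg (fun _ _ => abs_nonneg _)

end fourierside

/-- `L^∞` bound on `∂_k q^c_η − ∂_k q` where `q = Q e^{-‖x‖²/2}` for a polynomial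
`Q = Σ_{I ∈ S} a_I x^I` and `q^c_η = F⁻¹(χ̃_c(ηξ) F(q))`. -/
theorem stmt10 (n : ℕ) (hn : 0 < n)
    (S : Finset (Fin n → ℕ)) (a : (Fin n → ℕ) → ℝ)
    (c η : ℝ) (hc : 0 < c) (hη : 0 < η) (hcη : 1 ≤ c / (2 * η))
    (χ : EuclideanSpace ℝ (Fin n) → ℝ) (hχ : ContDiff ℝ (⊤ : ℕ∞) χ)
    (hχ01 : ∀ ξ, χ ξ ∈ Set.Icc (0:ℝ) 1)
    (hχsupp : tsupport χ ⊆ Metric.closedBall 0 c)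
    (hχ1 : ∀ ξ ∈ Metric.closedBall (0 : EuclideanSpace ℝ (Fin n)) (c / 2), χ ξ = 1)
    (Q q : EuclideanSpace ℝ (Fin n) → ℝ)
    (hQ : Q = fun x => ∑ I ∈ S, a I * ∏ j, x j ^ I j)
    (hq : q = fun x => Q x * Real.exp (-‖x‖ ^ 2 / 2))
    (qcη : EuclideanSpace ℝ (Fin n) → ℂ)
    (hqcη : qcη = fun x => (1 / (2 * Real.pi) ^ n) *
      ∫ ξ : EuclideanSpace ℝ (Fin n),
        (χ (η • ξ) : ℂ) * Fn (fun y => (q y : ℂ)) ξ * Complex.exp (Complex.I * (⟪x, ξ⟫ : ℝ))) :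
    ∀ (k : Fin n) (x : EuclideanSpace ℝ (Fin n)),
      ‖fderiv ℝ qcη x (EuclideanSpace.single k 1)
          - ((fderiv ℝ q x (EuclideanSpace.single k 1) : ℝ) : ℂ)‖ ≤
      Real.sqrt ((n / 2 + 3 : ℕ) : ℝ) * (c / (2 * η)) ^ ((n : ℝ) / 2) *
        Real.exp (-(1 / 4) * (c / (2 * η)) ^ 2) *
        ∑ I ∈ S, |a I| * Real.sqrt (∏ j, (Nat.factorial (I j) : ℝ)) := by
  intro k x
  have hqd : Differentiable ℝ q := by
    rw [hq, hQ]
    have h1 : Differentiable ℝ (fun x : EuclideanSpace ℝ (Fin n) => ‖x‖^2) :=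
      differentiable_id.norm_sq ℝ
    have h2 : ∀ j, Differentiable ℝ (fun x : EuclideanSpace ℝ (Fin n) => x j) := fun j =>
      (EuclideanSpace.proj (𝕜 := ℝ) j).differentiable
    fun_prop
  have hqsum : (fun y => (q y : ℂ)) = fun y => ∑ I ∈ S, (a I : ℂ) *
      (((∏ j, y j ^ I j) * Real.exp (-‖y‖^2/2) : ℝ) : ℂ) := by
    ext y
    rw [hq, hQ]
    push_cast
    rw [Finset.sum_mul]
    simp only [mul_assoc]
  have hqint : Integrable (fun y => (q y : ℂ)) := by
    rw [hqsum]
    exact integrable_finsetSum _ fun I _ => ((int_mono I).ofReal).const_mul _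
  set H := Fn (fun y => (q y : ℂ)) with hH
  have hHeq : ∀ ξ, H ξ = ∑ I ∈ S, (a I : ℂ) * (√(2*Real.pi)^n * ((∏ j, (-Complex.I)^(I j)) * (Gh I ξ : ℝ))) := by
    intro ξ
    rw [hH, hqsum]
    simp_rw [← Fn_mono]
    unfold Fn
    simp_rw [Finset.mul_sum]
    rw [integral_finsetSum]
    · refine Finset.sum_congr rfl fun I _ => ?_
      rw [← integral_const_mul]
      congr 1; ext y; ring
    · intro I _
      refine (((int_mono I).ofReal (𝕜 := ℂ)).const_mul (a I : ℂ)).norm.mono'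
        (AEStronglyMeasurable.mul (Continuous.aestronglyMeasurable (by fun_prop))
          (((int_mono I).ofReal (𝕜 := ℂ)).const_mul (a I : ℂ)).aestronglyMeasurable)
        (Eventually.of_forall fun y => ?_)
      rw [norm_mul, show (-Complex.I * ((⟪y, ξ⟫ : ℝ) : ℂ)) = Complex.I * ((-⟪y, ξ⟫ : ℝ) : ℂ) by
        push_cast; ring, norm_cexp_I, one_mul]
      exact le_rfl
  have hHle : ∀ ξ, ‖H ξ‖ ≤ ∑ I ∈ S, |a I| * (√(2*Real.pi)^n * |Gh I ξ|) := by
    intro ξ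
    rw [hHeq]
    refine (norm_sum_le _ _).trans (le_of_eq (Finset.sum_congr rfl fun I _ => ?_))
    simp [norm_prod, Real.sqrt_nonneg, abs_of_nonneg]
  have hHc : Continuous H := by
    rw [funext hHeq]
    have := fun I => cont_Gh (n := n) I
    fun_prop
  have hHint : Integrable H := by
    refine (integrable_finsetSum S fun I _ => ((int_Gh I).abs.const_mul (√(2*Real.pi)^n)).const_mul |a I|).mono'
      hHc.aestronglyMeasurable (Eventually.of_forall hHle)
  have hHint' : Integrable (fun ξ => ‖ξ‖ * ‖H ξ‖) := by
    refine (integrable_finsetSum S fun I _ => ((int_norm_Gh I).const_mul (√(2*Real.pi)^n)).const_mul |a I|).mono'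
      (Continuous.aestronglyMeasurable (by fun_prop)) (Eventually.of_forall fun ξ => ?_)
    rw [norm_mul, norm_norm, norm_norm]
    refine (mul_le_mul_of_nonneg_left (hHle ξ) (norm_nonneg _)).trans (le_of_eq ?_)
    rw [Finset.mul_sum]
    exact Finset.sum_congr rfl fun I _ => by ring
  -- multipliers
  have hmul : ∀ m : EuclideanSpace ℝ (Fin n) → ℝ, Continuous m → (∀ ξ, |m ξ| ≤ 1) →
      Integrable (fun ξ => (m ξ : ℂ) * H ξ) ∧ Integrable (fun ξ => ‖ξ‖ * ‖(m ξ : ℂ) * H ξ‖) := by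
    intro m hm hb
    have h1 : ∀ ξ, ‖(m ξ : ℂ) * H ξ‖ ≤ ‖H ξ‖ := by
      intro ξ
      rw [norm_mul, Complex.norm_real, Real.norm_eq_abs]
      exact mul_le_of_le_one_left (norm_nonneg _) (hb ξ)
    refine ⟨hHint.norm.mono' (Continuous.aestronglyMeasurable (by fun_prop))
      (Eventually.of_forall h1), hHint'.mono' (Continuous.aestronglyMeasurable (by fun_prop))
      (Eventually.of_forall fun ξ => ?_)⟩
    rw [norm_mul, norm_norm, norm_norm]
    exact mul_le_mul_of_nonneg_left (h1 ξ) (norm_nonneg _)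
  have hχc : Continuous (fun ξ : EuclideanSpace ℝ (Fin n) => χ (η • ξ)) := by
    have := hχ.continuous
    fun_prop
  obtain ⟨m1, m1'⟩ := hmul (fun ξ => χ (η • ξ)) hχc (fun ξ => by
    have := hχ01 (η • ξ)
    rw [abs_le]; constructor <;> linarith [this.1, this.2])
  obtain ⟨m2, m2'⟩ := hmul (fun ξ => χ (η • ξ) - 1) (by fun_prop) (fun ξ => by
    have := hχ01 (η • ξ)
    rw [abs_le]; constructor <;> linarith [this.1, this.2])
  have hosc : ∀ (h : EuclideanSpace ℝ (Fin n) → ℂ), Integrable h → ∀ x : EuclideanSpace ℝ (Fin n),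
      Integrable (fun ξ => h ξ * Complex.exp (Complex.I * (⟪x, ξ⟫ : ℝ))) := by
    intro h hi x
    refine hi.norm.mono' (hi.aestronglyMeasurable.mul (Continuous.aestronglyMeasurable (by fun_prop)))
      (Eventually.of_forall fun ξ => ?_)
    rw [norm_mul, norm_cexp_I, mul_one]
  have hqc : DifferentiableAt ℝ qcη x := by
    rw [hqcη]
    exact (fderiv_osc _ m1 m1' x).1.const_mul _
  have hqC : HasFDerivAt (fun y => (q y : ℂ)) (Complex.ofRealCLM ∘L fderiv ℝ q x) x :=
    Complex.ofRealCLM.hasFDerivAt.comp x (hqd x).hasFDerivAt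
  have hdiff : (fun y => qcη y - (q y : ℂ)) = fun y => (1 / (2 * Real.pi) ^ n : ℂ) *
      ∫ ξ, ((χ (η • ξ) - 1 : ℝ) : ℂ) * H ξ * Complex.exp (Complex.I * (⟪y, ξ⟫ : ℝ)) := by
    ext y
    have hinv := Fn_inversion _ hqint (by have := hqd.continuous; fun_prop) hHint y
    rw [← hinv, hqcη]
    rw [← mul_sub, ← integral_sub (hosc _ m1 y) (hosc _ hHint y)]
    congr 2; ext ξ
    push_cast
    ring
  have hfd : fderiv ℝ qcη x (EuclideanSpace.single k 1)
          - ((fderiv ℝ q x (EuclideanSpace.single k 1) : ℝ) : ℂ) = (1 / (2 * Real.pi) ^ n : ℂ) *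
      ∫ ξ, ((χ (η • ξ) - 1 : ℝ) : ℂ) * H ξ * Complex.exp (Complex.I * (⟪x, ξ⟫ : ℝ)) * Complex.I
        * (⟪ξ, EuclideanSpace.single k 1⟫ : ℝ) := by
    have h1 := (hqc.hasFDerivAt.sub hqC).fderiv
    have h2 : fderiv ℝ (fun y => qcη y - (q y : ℂ)) x = fderiv ℝ qcη x - Complex.ofRealCLM ∘L fderiv ℝ q x := h1
    rw [hdiff] at h2
    have h3 := congrArg (fun L => L (EuclideanSpace.single k 1)) h2
    simp only [sub_apply, ContinuousLinearMap.comp_apply, Complex.ofRealCLM_apply] at h3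
    obtain ⟨hd, hv⟩ := fderiv_osc _ m2 m2' x
    rw [← h3, fderiv_const_mul hd, smul_apply, hv, smul_eq_mul]
  rw [hfd, norm_mul]
  set R := c / (2 * η) with hR
  have hbound : ‖∫ ξ, ((χ (η • ξ) - 1 : ℝ) : ℂ) * H ξ * Complex.exp (Complex.I * (⟪x, ξ⟫ : ℝ)) * Complex.I
        * (⟪ξ, EuclideanSpace.single k 1⟫ : ℝ)‖ ≤
      ∑ I ∈ S, |a I| * (√(2*Real.pi)^n * ∫ ξ in {ξ : EuclideanSpace ℝ (Fin n) | R < ‖ξ‖},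
        |ξ k| * |Gh I ξ|) := by
    have hgi : Integrable (fun ξ : EuclideanSpace ℝ (Fin n) => ∑ I ∈ S, |a I| * (√(2*Real.pi)^n *
        (|ξ k| * |Gh I ξ|))) :=
      integrable_finsetSum S fun I _ => ((int_coord_Gh I k).const_mul _).const_mul _
    have h1 := norm_integral_le_of_norm_le (f := fun ξ => ((χ (η • ξ) - 1 : ℝ) : ℂ) * H ξ * Complex.exp (Complex.I * (⟪x, ξ⟫ : ℝ)) * Complex.I
        * (⟪ξ, EuclideanSpace.single k 1⟫ : ℝ)) (hgi.indicator (meas_out R)) (Eventually.of_forall fun ξ => by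
        by_cases hξ : R < ‖ξ‖
        · rw [indicator_of_mem (by exact hξ)]
          rw [norm_mul, norm_mul, norm_mul, norm_mul, norm_cexp_I, Complex.norm_I, Complex.norm_real,
            Complex.norm_real, EuclideanSpace.inner_single_right]
          have hb : ‖χ (η • ξ) - 1‖ ≤ 1 := by
            have := hχ01 (η • ξ)
            rw [Real.norm_eq_abs, abs_le]; constructor <;> linarith [this.1, this.2]
          simp only [mul_one, one_mul, conj_trivial, Real.norm_eq_abs (ξ k)]
          calc _ ≤ 1 * (∑ I ∈ S, |a I| * (√(2*Real.pi)^n * |Gh I ξ|)) * |ξ k| := by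
                gcongr
                exact hHle ξ
            _ = _ := by
                rw [one_mul, Finset.sum_mul]
                exact Finset.sum_congr rfl fun I _ => by ring
        · rw [indicator_of_notMem (by exact hξ)]
          have : χ (η • ξ) = 1 := by
            apply hχ1
            rw [mem_closedBall_zero_iff, norm_smul, Real.norm_eq_abs, abs_of_pos hη]
            rw [not_lt, hR, le_div_iff₀ (by positivity)] at hξ
            linarith
          simp [this])
    refine h1.trans (le_of_eq ?_)
    rw [integral_indicator (meas_out R), integral_finsetSum]
    · simp_rw [integral_const_mul]
    · exact fun I _ => (((int_coord_Gh I k).const_mul _).const_mul _).integrableOn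
  have hnorm : ‖(1 / (2 * Real.pi) ^ n : ℂ)‖ = 1 / (√(2*Real.pi)^n * √(2*Real.pi)^n) := by
    rw [← mul_pow, Real.mul_self_sqrt (by positivity)]
    have : (1 / (2 * Real.pi) ^ n : ℂ) = ((1 / (2 * Real.pi) ^ n : ℝ) : ℂ) := by push_cast; rfl
    rw [this, Complex.norm_real, Real.norm_of_nonneg (by positivity)]
  rw [hnorm]
  have hw : 0 < √(2*Real.pi)^n := by positivity
  refine (mul_le_mul_of_nonneg_left hbound (by positivity)).trans ?_
  rw [Finset.mul_sum, Finset.mul_sum]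
  refine Finset.sum_le_sum fun I _ => ?_
  have ht := herm_tail hcη I k
  have ht2 : ∫ ξ in {ξ : EuclideanSpace ℝ (Fin n) | R < ‖ξ‖}, |ξ k| * |Gh I ξ| =
      ∫ ξ in {ξ : EuclideanSpace ℝ (Fin n) | R < ‖ξ‖},
        |ξ k| * (|∏ j, (hp (I j)).eval (ξ j)| * Real.exp (-‖ξ‖^2/2)) := by
    congr 1; ext ξ
    rw [Gh, abs_mul, abs_of_pos (Real.exp_pos _)]
  rw [← ht2] at ht
  generalize √(2*Real.pi)^n = w at hw ht ⊢
  calc _ ≤ 1 / (w * w) * (|a I| * (w * (w * (√((n/2 + 3 : ℕ) : ℝ) * R ^ ((n:ℝ)/2) *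
        Real.exp (-(1/4) * R^2) * √(∏ j, ((I j).factorial : ℝ)))))) := by gcongr
    _ = _ := by field_simp

end
end
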